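/- arXiv:0908.3108 — 2 statements merged into one kernel-verified Lean document; each statement's English description precedes it below -/
import Mathlib

section
/- (Proposition 4.1) In the Gaussian observation model ω = Ax + ξ with ξ ∼ N(0, I_L), where X ⊆ ℝⁿ is convex compact, A is an L×n matrix and g ∈ ℝⁿ, for every ε ∈ (0, 1/2) there exists an affine estimate ĝ_ε (the one yielded by Theorem 3.2, with ε-risk at most Φ_*(ln(2/ε))) satisfying Risk(ĝ_ε; ε) ≤ ψ(ε)·Risk_*(ε), where ψ(ε) = √(2·ln(2/ε)) / ErfInv(ε); moreover ψ(ε) = 1 + o(1) as ε → 0⁺. -/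
open MeasureTheory Real Matrix Set Filter
open scoped ENNReal Topology

/-- The standard Gaussian `N(0, I_L)` density on `ℝ^L`. -/
noncomputable def stdGaussDensity {L : ℕ} (ω : Fin L → ℝ) : ℝ :=
  (2 * Real.pi) ^ (-(L : ℝ) / 2) * Real.exp (-(∑ i, ω i ^ 2) / 2)

/-- The distribution `N(Ax, I_L)` of the observation `ω = Ax + ξ`, `ξ ∼ N(0, I_L)`. -/
noncomputable def gaussObs {L n : ℕ} (A : Matrix (Fin L) (Fin n) ℝ) (x : Fin n → ℝ) :
    Measure (Fin L → ℝ) :=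
  volume.withDensity fun ω => ENNReal.ofReal (stdGaussDensity (ω - A.mulVec x))

/-- The Euclidean norm `‖v‖₂` on `ℝ^L`. -/
noncomputable def euclNorm {L : ℕ} (v : Fin L → ℝ) : ℝ :=
  Real.sqrt (∑ i, v i ^ 2)

/-- The `ε`-risk of an estimate `ghat` in the Gaussian observation model. -/
noncomputable def gaussRisk {L n : ℕ} (A : Matrix (Fin L) (Fin n) ℝ)
    (g : Fin n → ℝ) (X : Set (Fin n → ℝ)) (ghat : (Fin L → ℝ) → ℝ) (ε : ℝ) : ℝ :=
  sInf {δ : ℝ |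
    (⨆ x ∈ X, gaussObs A x {ω | δ < |ghat ω - g ⬝ᵥ x|}) < ENNReal.ofReal ε}

/-- The minimax optimal `ε`-risk over all Borel estimates in the Gaussian model. -/
noncomputable def gaussRiskStar {L n : ℕ} (A : Matrix (Fin L) (Fin n) ℝ)
    (g : Fin n → ℝ) (X : Set (Fin n → ℝ)) (ε : ℝ) : ℝ :=
  sInf {ρ : ℝ | ∃ ghat : (Fin L → ℝ) → ℝ, Measurable ghat ∧
    ρ = gaussRisk A g X ghat ε}

/-- The function `Φ_r(x, y; φ, α)` of the Gaussian model (with linear `φ`). -/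
noncomputable def gaussPhi {L n : ℕ} (A : Matrix (Fin L) (Fin n) ℝ) (g : Fin n → ℝ)
    (r : ℝ) (x y : Fin n → ℝ) (φ : Fin L → ℝ) (α : ℝ) : ℝ :=
  g ⬝ᵥ x - g ⬝ᵥ y
    + α * Real.log (∫ ω : Fin L → ℝ,
        Real.exp (-(φ ⬝ᵥ ω) / α) * stdGaussDensity (ω - A.mulVec x))
    + α * Real.log (∫ ω : Fin L → ℝ,
        Real.exp ((φ ⬝ᵥ ω) / α) * stdGaussDensity (ω - A.mulVec y))
    + 2 * α * r

/-- `Φ_*(r)`: `2Φ_*(r) = sup_{x,y∈X} inf_{φ∈ℝ^L, α>0} Φ_r(x,y;φ,α)`. -/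
noncomputable def gaussPhiStar {L n : ℕ} (A : Matrix (Fin L) (Fin n) ℝ)
    (g : Fin n → ℝ) (X : Set (Fin n → ℝ)) (r : ℝ) : ℝ :=
  (1/2) * sSup {v : ℝ | ∃ x ∈ X, ∃ y ∈ X,
    v = sInf {w : ℝ | ∃ φ : Fin L → ℝ, ∃ α : ℝ, 0 < α ∧
      w = gaussPhi A g r x y φ α}}

/-- The standard Gaussian upper tail probability `y = (1/√(2π)) ∫_x^∞ e^{−t²/2} dt`. -/
noncomputable def gaussTail (x : ℝ) : ℝ :=
  (Real.sqrt (2 * Real.pi))⁻¹ * ∫ t in Set.Ioi x, Real.exp (-t ^ 2 / 2)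

/-- The inverse error function `ErfInv`: for `y ∈ (0, 1/2)`, `ErfInv y` is the
unique `x` with `gaussTail x = y` (realized here as an infimum). -/
noncomputable def erfInv (y : ℝ) : ℝ :=
  sInf {x : ℝ | gaussTail x ≤ y}

/-
Let `m(ρ)` be Donoho's modulus, the supremum of `gᵀ(x - y)` over `x, y ∈ X` with
`‖A(x - y)‖₂ ≤ ρ`. Minimizing over `φ` and `α` explicitly gives `2Φ_*(r) = m(2√(2r))`.

Upper bound: by Lagrangian duality some `φ` satisfies
`gᵀ(x - y) - φᵀA(x - y) + ρ‖φ‖₂ ≤ m(ρ)` on `X`. So, with `ρ = 2t` and a suitable constant `c`, the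
bias of `φᵀω + c` is at most `m(2t)/2 - t‖φ‖₂`, while its noise `|φᵀξ|` exceeds `t‖φ‖₂` with
probability less than `ε` for `t = √(2 ln(2/ε))`.

Lower bound: an estimate of `ε`-risk below `m(ρ)/2` would distinguish two means at distance at most
`ρ` with both error probabilities below `ε`, which Neyman-Pearson forbids for `ρ = 2 ErfInv(ε)`.

The two bounds are compared through `m(ρ') ≤ (ρ'/ρ) m(ρ)`, which holds for `ρ ≤ ρ'` by convexity
of `X`; the Gaussian tail bounds `ErfInv(ε) ≤ √(2 ln(2/ε)) ≤ ErfInv(ε) + 3` give `ψ → 1`.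
-/

open ProbabilityTheory

section General

lemma isBounded_image_of_continuous {α β : Type*} [PseudoMetricSpace α] [ProperSpace α]
    [PseudoMetricSpace β] {s : Set α} (hs : Bornology.IsBounded s) {f : α → β}
    (hf : Continuous f) : Bornology.IsBounded (f '' s) :=
  (hs.isCompact_closure.image hf).isBounded.subset (image_mono subset_closure)

lemma tendsto_div_nhds_one_of_le_add {α : Type*} {l : Filter α} {u v : α → ℝ} {C : ℝ}
    (hv : Tendsto v l atTop) (hle : ∀ᶠ a in l, u a ≤ v a) (hge : ∀ᶠ a in l, v a ≤ u a + C) :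
    Tendsto (fun a => v a / u a) l (𝓝 1) := by
  have hu : Tendsto u l atTop :=
    tendsto_atTop_mono' l (hge.mono fun _ h => sub_le_iff_le_add.2 h)
      (tendsto_atTop_add_const_right l (-C) hv)
  have hdiff : Tendsto (fun a => (v a - u a) / u a) l (𝓝 0) :=
    tendsto_bdd_div_atTop_nhds_zero (b := 0) (B := C) (hle.mono fun _ h => sub_nonneg.2 h)
      (hge.mono fun _ h => sub_le_iff_le_add'.2 h) hu
  have hone : Tendsto (fun a => 1 + (v a - u a) / u a) l (𝓝 1) := by
    simpa only [add_zero] using hdiff.const_add 1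
  refine hone.congr' ?_
  filter_upwards [hu.eventually_gt_atTop 0] with a ha
  field_simp
  ring

lemma apply_sInf_setOf_le_eq {α β : Type*} [ConditionallyCompleteLinearOrder α]
    [TopologicalSpace α] [OrderTopology α] [DenselyOrdered α] [NoMinOrder α] [LinearOrder β]
    [TopologicalSpace β] [OrderClosedTopology β] {f : α → β} (hf : Continuous f) {y : β}
    (hne : {x | f x ≤ y}.Nonempty) (hbdd : BddBelow {x | f x ≤ y}) :
    f (sInf {x | f x ≤ y}) = y := by
  refine le_antisymm ((isClosed_le hf continuous_const).csInf_mem hne hbdd) ?_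
  refine ge_of_tendsto (hf.continuousWithinAt (s := Iio (sInf {x | f x ≤ y}))) ?_
  filter_upwards [self_mem_nhdsWithin] with x hx
  exact (not_le.1 fun hle => (csInf_le hbdd hle).not_gt hx).le

lemma exists_forall_abs_sub_le {α : Type*} {s : Set α} {h : α → ℝ} {B : ℝ}
    (hosc : ∀ x ∈ s, ∀ y ∈ s, h x - h y ≤ 2 * B) : ∃ c, ∀ x ∈ s, |h x - c| ≤ B := by
  rcases s.eq_empty_or_nonempty with rfl | ⟨z, hz⟩
  · simp only [mem_empty_iff_false, false_imp_iff, implies_true, exists_const]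
  have hbdd : BddAbove (h '' s) :=
    ⟨h z + 2 * B, forall_mem_image.2 fun x hx => sub_le_iff_le_add'.1 (hosc x hx z hz)⟩
  refine ⟨sSup (h '' s) - B, fun x hx => abs_sub_le_iff.2 ⟨?_, ?_⟩⟩
  · linarith [le_csSup hbdd (mem_image_of_mem h hx)]
  · have hsup : sSup (h '' s) ≤ h x + 2 * B :=
      csSup_le (Set.Nonempty.image h ⟨z, hz⟩)
        (forall_mem_image.2 fun y hy => sub_le_iff_le_add'.1 (hosc y hy x hx))
    linarith

end General

section Modulus

variable {E F : Type*} [AddCommGroup E] [Module ℝ E] [NormedAddCommGroup F] [NormedSpace ℝ F]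
  {T : E →ₗ[ℝ] F} {g : E →ₗ[ℝ] ℝ} {X K : Set E} {ρ ρ' M : ℝ}

/-- Donoho's modulus of continuity `ρ ↦ sup {g (x - y) | x, y ∈ X, ‖T (x - y)‖ ≤ ρ}` of the
functional `g` on `X` with respect to the observation map `T`. -/
noncomputable def modulusOfContinuity (T : E →ₗ[ℝ] F) (g : E →ₗ[ℝ] ℝ) (X : Set E) (ρ : ℝ) : ℝ :=
  sSup {v | ∃ x ∈ X, ∃ y ∈ X, ‖T (x - y)‖ ≤ ρ ∧ v = g (x - y)}

lemma map_sub_le_modulusOfContinuity (hg : Bornology.IsBounded (g '' X)) {x y : E} (hx : x ∈ X)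
    (hy : y ∈ X) (hxy : ‖T (x - y)‖ ≤ ρ) : g (x - y) ≤ modulusOfContinuity T g X ρ := by
  obtain ⟨C, hC⟩ := hg.exists_norm_le
  refine le_csSup ⟨C + C, ?_⟩ ⟨x, hx, y, hy, hxy, rfl⟩
  rintro _ ⟨x', hx', y', hy', -, rfl⟩
  rw [map_sub]
  exact (le_norm_self _).trans ((norm_sub_le _ _).trans
    (add_le_add (hC _ (mem_image_of_mem g hx')) (hC _ (mem_image_of_mem g hy'))))

lemma modulusOfContinuity_le (hX : X.Nonempty) (hρ : 0 ≤ ρ)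
    (hM : ∀ x ∈ X, ∀ y ∈ X, ‖T (x - y)‖ ≤ ρ → g (x - y) ≤ M) :
    modulusOfContinuity T g X ρ ≤ M := by
  obtain ⟨z, hz⟩ := hX
  refine csSup_le ⟨_, z, hz, z, hz, by simpa only [sub_self, map_zero, norm_zero], rfl⟩ ?_
  rintro _ ⟨x, hx, y, hy, hxy, rfl⟩
  exact hM x hx y hy hxy

-- Shrink the segment from `y` to `x` by the factor `ρ / ρ'`.
lemma modulusOfContinuity_le_div_mul (hX : X.Nonempty) (hXc : Convex ℝ X)
    (hg : Bornology.IsBounded (g '' X)) (hρ : 0 < ρ) (hle : ρ ≤ ρ') :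
    modulusOfContinuity T g X ρ' ≤ ρ' / ρ * modulusOfContinuity T g X ρ := by
  have hρ' : 0 < ρ' := hρ.trans_le hle
  refine modulusOfContinuity_le hX hρ'.le fun x hx y hy hxy => ?_
  have hs : 0 < ρ / ρ' := div_pos hρ hρ'
  have hmem : y + (ρ / ρ') • (x - y) ∈ X :=
    hXc.add_smul_sub_mem hy hx ⟨hs.le, (div_le_one hρ').2 hle⟩
  have hnorm : ‖T (y + (ρ / ρ') • (x - y) - y)‖ ≤ ρ := by
    rw [add_sub_cancel_left, map_smul, norm_smul, Real.norm_of_nonneg hs.le]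
    calc ρ / ρ' * ‖T (x - y)‖ ≤ ρ / ρ' * ρ' := by gcongr
      _ = ρ := div_mul_cancel₀ ρ hρ'.ne'
  have hshrunk := map_sub_le_modulusOfContinuity hg hmem hy hnorm
  rw [add_sub_cancel_left, map_smul, smul_eq_mul] at hshrunk
  calc g (x - y) = ρ' / ρ * (ρ / ρ' * g (x - y)) := by field_simp
    _ ≤ ρ' / ρ * modulusOfContinuity T g X ρ := by gcongr

lemma mul_norm_le_of_forall_norm_lt {φ : StrongDual ℝ F} (hρ : 0 < ρ)
    (hφ : ∀ u, ‖u‖ < ρ → φ u ≤ M) : ρ * ‖φ‖ ≤ M := by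
  have habs (u : F) (hu : u ∈ Metric.closedBall 0 ρ) : ‖φ u‖ ≤ M := by
    rw [← closure_ball 0 hρ.ne'] at hu
    refine closure_minimal (fun w hw => ?_)
      (isClosed_le φ.continuous.norm continuous_const) hu
    rw [mem_ball_zero_iff] at hw
    have hneg := hφ (-w) (by rwa [norm_neg])
    rw [map_neg] at hneg
    exact abs_le'.2 ⟨hφ w hw, hneg⟩
  rw [mul_comm, ← le_div_iff₀ hρ]
  exact ContinuousLinearMap.opNorm_bound_of_ball_bound hρ M φ habs

lemma exists_strongDual_forall_sub_add_le (hK : Convex ℝ K) {z₀ : E} (hz₀ : z₀ ∈ K)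
    (hTz₀ : ‖T z₀‖ < ρ) (hM : ∀ z ∈ K, ‖T z‖ < ρ → g z ≤ M) :
    ∃ φ : StrongDual ℝ F, ∀ z ∈ K, ∀ u, ‖u‖ < ρ → g z - φ (T z) + φ u ≤ M := by
  have hdisj : Disjoint (Metric.ball (0 : F) ρ ×ˢ Ioi M) (T.prod g '' K) := by
    rw [Set.disjoint_left]
    rintro _ hmem ⟨z, hz, rfl⟩
    exact (hM z hz (mem_ball_zero_iff.1 hmem.1)).not_gt hmem.2
  obtain ⟨f, c, hfball, hfK⟩ := geometric_hahn_banach_open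
    ((convex_ball 0 ρ).prod (convex_Ioi M)) (Metric.isOpen_ball.prod isOpen_Ioi)
    (hK.linear_image (T.prod g)) hdisj
  have hf (u : F) (s : ℝ) : f (u, s) = f (u, 0) + s * f (0, 1) := by
    rw [← smul_eq_mul, ← map_smul, ← map_add]
    simp only [Prod.smul_mk, smul_zero, smul_eq_mul, mul_one, Prod.mk_add_mk, add_zero, zero_add]
  have hsep {u : F} (hu : ‖u‖ < ρ) {s : ℝ} (hs : M < s) {z : E} (hz : z ∈ K) :
      f (u, 0) + s * f (0, 1) < f (T z, 0) + g z * f (0, 1) := by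
    rw [← hf, ← hf]
    exact (hfball (u, s) ⟨mem_ball_zero_iff.2 hu, hs⟩).trans_le (hfK _ (mem_image_of_mem _ hz))
  -- The Slater point `z₀` makes the separating hyperplane non-vertical.
  have hκ : f (0, 1) < 0 := by
    have hvert := hsep hTz₀ (lt_max_of_lt_left (lt_add_one M)) hz₀ (s := max (M + 1) (g z₀ + 1))
    nlinarith [le_max_right (M + 1) (g z₀ + 1)]
  refine ⟨(-f (0, 1))⁻¹ • f.comp (ContinuousLinearMap.inl ℝ F ℝ), fun z hz u hu => ?_⟩
  refine le_of_forall_gt_imp_ge_of_dense fun s hs => ?_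
  have hlt := hsep hu hs hz
  simp only [_root_.smul_apply, ContinuousLinearMap.comp_apply,
    ContinuousLinearMap.inl_apply, smul_eq_mul]
  rw [sub_add, ← mul_sub, sub_le_iff_le_add, ← sub_le_iff_le_add', inv_mul_eq_div,
    le_div_iff₀ (neg_pos.2 hκ)]
  linarith

lemma exists_strongDual_map_sub_le_modulusOfContinuity (hX : X.Nonempty) (hXc : Convex ℝ X)
    (hg : Bornology.IsBounded (g '' X)) (hρ : 0 < ρ) :
    ∃ φ : StrongDual ℝ F, ∀ x ∈ X, ∀ y ∈ X,
      g (x - y) - φ (T (x - y)) + ρ * ‖φ‖ ≤ modulusOfContinuity T g X ρ := by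
  obtain ⟨z, hz⟩ := hX
  obtain ⟨φ, hφ⟩ := exists_strongDual_forall_sub_add_le (T := T) (g := g) (ρ := ρ)
    (M := modulusOfContinuity T g X ρ) (hXc.sub hXc) (sub_mem_sub hz hz)
    (by rwa [sub_self, map_zero, norm_zero]) (by
      rintro _ ⟨x, hx, y, hy, rfl⟩ hxy
      exact map_sub_le_modulusOfContinuity hg hx hy hxy.le)
  refine ⟨φ, fun x hx y hy => ?_⟩
  rw [← le_sub_iff_add_le']
  exact mul_norm_le_of_forall_norm_lt hρ fun u hu =>
    le_sub_iff_add_le'.2 (hφ _ (sub_mem_sub hx hy) u hu)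

end Modulus

section GaussTail

lemma gaussianReal_Ioi (t : ℝ) : gaussianReal 0 1 (Ioi t) = ENNReal.ofReal (gaussTail t) := by
  rw [gaussianReal_apply_eq_integral _ one_ne_zero, gaussTail, ← integral_const_mul]
  simp [gaussianPDFReal]

lemma gaussTail_nonneg (t : ℝ) : 0 ≤ gaussTail t := by
  unfold gaussTail
  positivity

lemma gaussTail_eq_one_sub_cdf (t : ℝ) : gaussTail t = 1 - cdf (gaussianReal 0 1) t := by
  rw [cdf_eq_real, ← probReal_compl_eq_one_sub measurableSet_Iic, compl_Iic, measureReal_def,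
    gaussianReal_Ioi, ENNReal.toReal_ofReal (gaussTail_nonneg t)]

lemma antitone_gaussTail : Antitone gaussTail := fun a b hab => by
  rw [gaussTail_eq_one_sub_cdf, gaussTail_eq_one_sub_cdf]
  exact sub_le_sub_left (monotone_cdf _ hab) 1

lemma tendsto_gaussTail_atTop : Tendsto gaussTail atTop (𝓝 0) := by
  simpa only [← gaussTail_eq_one_sub_cdf, sub_self]
    using (tendsto_cdf_atTop (gaussianReal 0 1)).const_sub 1

lemma tendsto_gaussTail_atBot : Tendsto gaussTail atBot (𝓝 1) := by
  simpa only [← gaussTail_eq_one_sub_cdf, sub_zero]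
    using (tendsto_cdf_atBot (gaussianReal 0 1)).const_sub 1

lemma integrable_exp_neg_sq_div_two : Integrable fun t : ℝ => exp (-t ^ 2 / 2) := by
  refine (integrable_exp_neg_mul_sq (b := 1 / 2) (by norm_num)).congr (ae_of_all _ fun t => ?_)
  ring_nf

lemma continuous_gaussTail : Continuous gaussTail := by
  refine continuous_const.mul (continuous_iff_continuousAt.2 fun a => ?_)
  exact (integrable_exp_neg_sq_div_two.integrableOn.continuousOn_Ici_primitive_Ioi
    (a₀ := a - 1)).continuousAt (Ici_mem_nhds (by linarith))

lemma gaussTail_zero : gaussTail 0 = 1 / 2 := by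
  have hint : ∫ t in Ioi (0 : ℝ), exp (-t ^ 2 / 2) = √(2 * π) / 2 := by
    rw [show 2 * π = π / (1 / 2) by ring, ← integral_gaussian_Ioi (1 / 2)]
    congr 1
    ext t
    ring_nf
  have hne : √(2 * π) ≠ 0 := by positivity
  rw [gaussTail, hint]
  field_simp

-- Substitute `t = s + x` and use `(s + x) ^ 2 ≥ s ^ 2 + x ^ 2`.
lemma gaussTail_le_exp {x : ℝ} (hx : 0 ≤ x) : gaussTail x ≤ exp (-x ^ 2 / 2) / 2 := by
  have hshift : ∫ t in Ioi x, exp (-t ^ 2 / 2) = ∫ s in Ioi (0 : ℝ), exp (-(s + x) ^ 2 / 2) := by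
    have hpre := (measurePreserving_add_right volume x).setIntegral_preimage_emb
      (measurableEmbedding_addRight x) (fun t => exp (-t ^ 2 / 2)) (Ioi x)
    rw [← hpre, preimage_add_const_Ioi, sub_self]
  have hle : ∫ s in Ioi (0 : ℝ), exp (-(s + x) ^ 2 / 2) ≤
      exp (-x ^ 2 / 2) * ∫ s in Ioi (0 : ℝ), exp (-s ^ 2 / 2) := by
    rw [← integral_const_mul]
    refine setIntegral_mono_on (integrable_exp_neg_sq_div_two.comp_add_right x).integrableOn
      (integrable_exp_neg_sq_div_two.const_mul _).integrableOn measurableSet_Ioi fun s hs => ?_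
    rw [← Real.exp_add, Real.exp_le_exp]
    nlinarith [mul_nonneg (mem_Ioi.1 hs).le hx]
  calc gaussTail x
      ≤ (√(2 * π))⁻¹ * (exp (-x ^ 2 / 2) * ∫ s in Ioi (0 : ℝ), exp (-s ^ 2 / 2)) := by
        rw [gaussTail, hshift]
        gcongr
    _ = exp (-x ^ 2 / 2) * gaussTail 0 := by
        rw [gaussTail]
        ring
    _ = exp (-x ^ 2 / 2) / 2 := by rw [gaussTail_zero, mul_one_div]

lemma inv_sqrt_mul_exp_le_gaussTail {x : ℝ} (hx : 0 ≤ x) :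
    (√(2 * π))⁻¹ * exp (-(x + 1) ^ 2 / 2) ≤ gaussTail x := by
  unfold gaussTail
  gcongr
  calc exp (-(x + 1) ^ 2 / 2) = ∫ t in Ioc x (x + 1), exp (-(x + 1) ^ 2 / 2) := by
        rw [setIntegral_const, Real.volume_real_Ioc_of_le (by linarith), add_sub_cancel_left,
          one_smul]
    _ ≤ ∫ t in Ioc x (x + 1), exp (-t ^ 2 / 2) := by
        refine setIntegral_mono_on (integrableOn_const measure_Ioc_lt_top.ne)
          integrable_exp_neg_sq_div_two.integrableOn measurableSet_Ioc fun t ht => ?_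
        have ht0 : 0 ≤ t := hx.trans ht.1.le
        gcongr
        exact ht.2
    _ ≤ ∫ t in Ioi x, exp (-t ^ 2 / 2) :=
        setIntegral_mono_set integrable_exp_neg_sq_div_two.integrableOn
          (ae_of_all _ fun _ => (exp_pos _).le) Ioc_subset_Ioi_self.eventuallyLE

lemma two_mul_exp_le_gaussTail {x : ℝ} (hx : 0 ≤ x) :
    2 * exp (-(x + 3) ^ 2 / 2) ≤ gaussTail x := by
  have hsqrt : √(2 * π) ≤ 3 := Real.sqrt_le_iff.2 ⟨by norm_num, by linarith [Real.pi_lt_four]⟩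
  have hexp : 2 * √(2 * π) ≤ exp 4 := by
    have hpow : exp 4 = exp 1 ^ 4 := by rw [← Real.exp_nat_mul]; norm_num
    have hbase : (2 : ℝ) ^ 4 ≤ exp 1 ^ 4 := by
      gcongr
      linarith [Real.add_one_le_exp 1]
    linarith
  refine le_trans ?_ (inv_sqrt_mul_exp_le_gaussTail hx)
  rw [← div_eq_inv_mul, le_div_iff₀ (by positivity)]
  calc 2 * exp (-(x + 3) ^ 2 / 2) * √(2 * π) = 2 * √(2 * π) * exp (-(x + 3) ^ 2 / 2) := by ring
    _ ≤ exp 4 * exp (-(x + 3) ^ 2 / 2) := by gcongr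
    _ ≤ exp (-(x + 1) ^ 2 / 2) := by
        rw [← Real.exp_add, Real.exp_le_exp]
        nlinarith

end GaussTail

section ErfInv

variable {ε x : ℝ}

lemma bddBelow_setOf_gaussTail_le (hε : ε < 1) : BddBelow {x | gaussTail x ≤ ε} := by
  obtain ⟨b, hb⟩ := (tendsto_gaussTail_atBot.eventually_const_lt hε).exists
  exact ⟨b, fun x hx => le_of_not_gt fun hlt =>
    ((antitone_gaussTail hlt.le).trans hx).not_gt hb⟩

lemma gaussTail_erfInv (hε : ε ∈ Ioo 0 1) : gaussTail (erfInv ε) = ε :=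
  apply_sInf_setOf_le_eq continuous_gaussTail
    (tendsto_gaussTail_atTop.eventually_le_const hε.1).exists (bddBelow_setOf_gaussTail_le hε.2)

lemma erfInv_le_of_gaussTail_le (hε : ε < 1) (hx : gaussTail x ≤ ε) : erfInv ε ≤ x :=
  csInf_le (bddBelow_setOf_gaussTail_le hε) hx

lemma erfInv_pos (hε : ε ∈ Ioo 0 (1 / 2)) : 0 < erfInv ε := by
  by_contra! hle
  have htail := antitone_gaussTail hle
  rw [gaussTail_zero, gaussTail_erfInv ⟨hε.1, by linarith [hε.2]⟩] at htail
  exact htail.not_gt hε.2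

lemma gaussTail_sqrt_log_le (hε : ε ∈ Ioc 0 2) : gaussTail √(2 * log (2 / ε)) ≤ ε / 4 := by
  have hpos : 0 < ε := hε.1
  have hlog : 0 ≤ log (2 / ε) := Real.log_nonneg ((one_le_div hpos).2 hε.2)
  calc gaussTail √(2 * log (2 / ε)) ≤ exp (-√(2 * log (2 / ε)) ^ 2 / 2) / 2 :=
        gaussTail_le_exp (Real.sqrt_nonneg _)
    _ = (2 / ε)⁻¹ / 2 := by
        rw [Real.sq_sqrt (by positivity), neg_div, mul_div_cancel_left₀ _ two_ne_zero,
          Real.exp_neg, Real.exp_log (by positivity)]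
    _ = ε / 4 := by
        rw [inv_div, div_div]
        norm_num

lemma erfInv_le_sqrt_log (hε : ε ∈ Ioo 0 1) : erfInv ε ≤ √(2 * log (2 / ε)) :=
  erfInv_le_of_gaussTail_le hε.2
    ((gaussTail_sqrt_log_le ⟨hε.1, by linarith [hε.2]⟩).trans (by linarith [hε.1]))

lemma sqrt_log_le_erfInv_add_three (hε : ε ∈ Ioo 0 (1 / 2)) :
    √(2 * log (2 / ε)) ≤ erfInv ε + 3 := by
  have hpos : 0 < ε := hε.1
  have hq : 0 < erfInv ε := erfInv_pos hε
  have htail : 2 * exp (-(erfInv ε + 3) ^ 2 / 2) ≤ ε :=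
    (two_mul_exp_le_gaussTail hq.le).trans_eq (gaussTail_erfInv ⟨hpos, by linarith [hε.2]⟩)
  have hlog : log (2 / ε) ≤ (erfInv ε + 3) ^ 2 / 2 := by
    rw [Real.log_le_iff_le_exp (by positivity), div_le_iff₀ hpos, ← div_le_iff₀' (exp_pos _),
      div_eq_mul_inv, ← Real.exp_neg, ← neg_div]
    exact htail
  rw [Real.sqrt_le_left (by positivity)]
  linarith

lemma tendsto_sqrt_log_two_div_atTop :
    Tendsto (fun t : ℝ => √(2 * log (2 / t))) (𝓝[>] 0) atTop := by
  have hdiv : Tendsto (fun t : ℝ => 2 / t) (𝓝[>] 0) atTop := by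
    simpa only [div_eq_mul_inv] using tendsto_inv_nhdsGT_zero.const_mul_atTop two_pos
  exact Real.tendsto_sqrt_atTop.comp
    ((Real.tendsto_log_atTop.comp hdiv).const_mul_atTop two_pos)

lemma tendsto_sqrt_log_div_erfInv :
    Tendsto (fun t : ℝ => √(2 * log (2 / t)) / erfInv t) (𝓝[>] 0) (𝓝 1) := by
  have hmem : ∀ᶠ t : ℝ in 𝓝[>] 0, t ∈ Ioo 0 (1 / 2) := Ioo_mem_nhdsGT (by norm_num)
  refine tendsto_div_nhds_one_of_le_add tendsto_sqrt_log_two_div_atTop ?_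
    (hmem.mono fun t ht => sqrt_log_le_erfInv_add_three ht)
  exact hmem.mono fun t ht => erfInv_le_sqrt_log ⟨ht.1, by linarith [ht.2]⟩

end ErfInv

section Euclidean

variable {L : ℕ} (u v : Fin L → ℝ)

lemma euclNorm_sq : euclNorm v ^ 2 = v ⬝ᵥ v := by
  rw [euclNorm, Real.sq_sqrt (by positivity), dotProduct]
  simp only [pow_two]

lemma euclNorm_eq_norm : euclNorm v = ‖WithLp.toLp 2 v‖ := by
  simp only [euclNorm, EuclideanSpace.norm_eq, Real.norm_eq_abs, sq_abs]

lemma euclNorm_nonneg : 0 ≤ euclNorm v := Real.sqrt_nonneg _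

lemma euclNorm_zero : euclNorm (0 : Fin L → ℝ) = 0 := by
  rw [euclNorm_eq_norm, WithLp.toLp_zero, norm_zero]

variable {v} in
lemma euclNorm_pos (hv : v ≠ 0) : 0 < euclNorm v := by
  rwa [euclNorm_eq_norm, norm_pos_iff, ne_eq, WithLp.toLp_eq_zero]

lemma euclNorm_smul (c : ℝ) : euclNorm (c • v) = |c| * euclNorm v := by
  rw [euclNorm_eq_norm, WithLp.toLp_smul, norm_smul, Real.norm_eq_abs, euclNorm_eq_norm]

lemma euclNorm_neg : euclNorm (-v) = euclNorm v := by
  rw [euclNorm_eq_norm, WithLp.toLp_neg, norm_neg, euclNorm_eq_norm]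

lemma dotProduct_le_euclNorm_mul_euclNorm : u ⬝ᵥ v ≤ euclNorm u * euclNorm v :=
  Real.sum_mul_le_sqrt_mul_sqrt _ _ _

end Euclidean

section PiMeasure

variable {ι : Type*} [Fintype ι]

lemma pi_withDensity_ofReal {α : ι → Type*} [∀ i, MeasurableSpace (α i)]
    {μ : ∀ i, Measure (α i)} [∀ i, SigmaFinite (μ i)] {f : ∀ i, α i → ℝ}
    (hf : ∀ i, Integrable (f i) (μ i)) (hf₀ : ∀ i a, 0 ≤ f i a) :
    Measure.pi (fun i => (μ i).withDensity fun a => ENNReal.ofReal (f i a)) =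
      (Measure.pi μ).withDensity fun a => ENNReal.ofReal (∏ i, f i (a i)) := by
  have (i : ι) : IsFiniteMeasure ((μ i).withDensity fun a => ENNReal.ofReal (f i a)) :=
    isFiniteMeasure_withDensity_ofReal (hf i).2
  refine Measure.pi_eq fun s hs => ?_
  have hint : Integrable (fun a => ∏ i, f i (a i)) (Measure.pi fun i => (μ i).restrict (s i)) :=
    Integrable.fintype_prod_dep fun i => (hf i).integrableOn
  rw [withDensity_apply _ (MeasurableSet.univ_pi hs), Measure.restrict_pi_pi,
    ← ofReal_integral_eq_lintegral_ofReal hint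
      (ae_of_all _ fun a => Finset.prod_nonneg fun i _ => hf₀ i (a i)),
    integral_fintype_prod_eq_prod,
    ENNReal.ofReal_prod_of_nonneg fun i _ => integral_nonneg (hf₀ i)]
  refine Finset.prod_congr rfl fun i _ => ?_
  rw [withDensity_apply _ (hs i),
    ofReal_integral_eq_lintegral_ofReal (hf i).integrableOn (ae_of_all _ (hf₀ i))]

lemma measurable_dotProduct_left (φ : ι → ℝ) : Measurable fun ω : ι → ℝ => φ ⬝ᵥ ω := by
  unfold dotProduct
  fun_prop

lemma map_dotProduct_pi_gaussianReal {L : ℕ} (φ m : Fin L → ℝ) :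
    (Measure.pi fun i => gaussianReal (m i) 1).map (φ ⬝ᵥ ·) =
      gaussianReal (φ ⬝ᵥ m) (euclNorm φ ^ 2).toNNReal := by
  have hmap (i : Fin L) :
      (Measure.pi fun i => gaussianReal (m i) 1).map (fun ω : Fin L → ℝ => φ i * ω i) =
        gaussianReal (φ i * m i) (.mk (φ i ^ 2) (sq_nonneg _)) :=
    calc (Measure.pi fun i => gaussianReal (m i) 1).map (fun ω : Fin L → ℝ => φ i * ω i)
        = ((Measure.pi fun i => gaussianReal (m i) 1).map (Function.eval i)).map (φ i * ·) :=
          (Measure.map_map (by fun_prop) (by fun_prop)).symm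
      _ = gaussianReal (φ i * m i) (.mk (φ i ^ 2) (sq_nonneg _)) := by
          rw [(measurePreserving_eval _ i).map_eq, gaussianReal_map_const_mul, mul_one]
  have hindep : iIndepFun (fun i (ω : Fin L → ℝ) => φ i * ω i)
      (Measure.pi fun i => gaussianReal (m i) 1) :=
    iIndepFun_pi (X := fun i t => φ i * t) fun i => by fun_prop
  have : IsProbabilityMeasure
      ((Measure.pi fun i => gaussianReal (m i) 1).map fun ω : Fin L → ℝ => φ ⬝ᵥ ω) :=
    Measure.isProbabilityMeasure_map (measurable_dotProduct_left φ).aemeasurable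
  refine Measure.ext_of_charFun (funext fun t => ?_)
  change charFun (Measure.map (fun ω : Fin L → ℝ => ∑ i, φ i * ω i) _) t = _
  rw [hindep.charFun_map_fun_sum_eq_prod
      fun i => ((measurable_pi_apply i).const_mul (φ i)).aemeasurable, Finset.prod_apply,
    charFun_gaussianReal, Real.coe_toNNReal _ (sq_nonneg _), euclNorm_sq]
  simp only [hmap, charFun_gaussianReal, NNReal.coe_mk, ← Complex.exp_sum,
    Finset.sum_sub_distrib, ← Finset.sum_mul, ← Finset.mul_sum, ← Finset.sum_div, dotProduct,
    Complex.ofReal_sum, Complex.ofReal_mul, pow_two]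

end PiMeasure

section Observation

variable {L n : ℕ} (A : Matrix (Fin L) (Fin n) ℝ) (x : Fin n → ℝ) (φ : Fin L → ℝ)

lemma stdGaussDensity_eq (ω : Fin L → ℝ) :
    stdGaussDensity ω = (2 * π) ^ (-(L : ℝ) / 2) * exp (-euclNorm ω ^ 2 / 2) := by
  rw [stdGaussDensity, euclNorm, Real.sq_sqrt (by positivity)]

lemma stdGaussDensity_nonneg (ω : Fin L → ℝ) : 0 ≤ stdGaussDensity ω := by
  unfold stdGaussDensity
  positivity

lemma measurable_stdGaussDensity_sub (m : Fin L → ℝ) :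
    Measurable fun ω => stdGaussDensity (ω - m) := by
  unfold stdGaussDensity
  fun_prop

lemma stdGaussDensity_sub_eq_prod (ω m : Fin L → ℝ) :
    stdGaussDensity (ω - m) = ∏ i, gaussianPDFReal (m i) 1 (ω i) := by
  simp only [stdGaussDensity, gaussianPDFReal, Finset.prod_mul_distrib, ← Real.exp_sum,
    NNReal.coe_one, mul_one, Finset.prod_const, Finset.card_univ, Fintype.card_fin,
    Pi.sub_apply, neg_div, Finset.sum_neg_distrib, Finset.sum_div]
  congr 1
  rw [Real.sqrt_eq_rpow, ← Real.rpow_neg (by positivity), ← Real.rpow_natCast,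
    ← Real.rpow_mul (by positivity)]
  ring_nf

lemma gaussObs_eq_pi : gaussObs A x = Measure.pi fun i => gaussianReal ((A *ᵥ x) i) 1 := by
  simp only [gaussObs, stdGaussDensity_sub_eq_prod, volume_pi]
  rw [← pi_withDensity_ofReal (fun i => integrable_gaussianPDFReal _ 1)
    fun i => gaussianPDFReal_nonneg _ 1]
  simp only [gaussianReal_of_var_ne_zero _ one_ne_zero, gaussianPDF_def]

instance isProbabilityMeasure_gaussObs : IsProbabilityMeasure (gaussObs A x) := by
  rw [gaussObs_eq_pi]
  infer_instance

lemma map_dotProduct_gaussObs :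
    (gaussObs A x).map (φ ⬝ᵥ ·) = gaussianReal (φ ⬝ᵥ A *ᵥ x) (euclNorm φ ^ 2).toNNReal := by
  rw [gaussObs_eq_pi, map_dotProduct_pi_gaussianReal]

lemma integral_exp_dotProduct_gaussObs :
    ∫ ω, exp (φ ⬝ᵥ ω) ∂gaussObs A x = exp (φ ⬝ᵥ A *ᵥ x + euclNorm φ ^ 2 / 2) := by
  have hmgf := mgf_gaussianReal (map_dotProduct_gaussObs A x φ) 1
  simpa only [mgf, one_mul, mul_one, one_pow,
    Real.coe_toNNReal _ (sq_nonneg (euclNorm φ))] using hmgf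

lemma integral_gaussObs (f : (Fin L → ℝ) → ℝ) :
    ∫ ω, f ω ∂gaussObs A x = ∫ ω, f ω * stdGaussDensity (ω - A *ᵥ x) := by
  rw [gaussObs, integral_withDensity_eq_integral_toReal_smul
    (measurable_stdGaussDensity_sub _).ennreal_ofReal (ae_of_all _ fun _ => ENNReal.ofReal_lt_top)]
  simp only [ENNReal.toReal_ofReal (stdGaussDensity_nonneg _), smul_eq_mul, mul_comm]

variable {φ}

lemma gaussObs_setOf_lt_dotProduct_sub (hφ : φ ≠ 0) (t : ℝ) :
    gaussObs A x {ω | t * euclNorm φ < φ ⬝ᵥ (ω - A *ᵥ x)} = ENNReal.ofReal (gaussTail t) := by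
  have hpos : 0 < euclNorm φ := euclNorm_pos hφ
  have hvar : (euclNorm φ ^ 2).toNNReal / .mk (euclNorm φ ^ 2) (sq_nonneg _) = 1 := by
    rw [Real.toNNReal_of_nonneg (sq_nonneg _)]
    exact div_self (ne_of_gt (show (0 : ℝ) < euclNorm φ ^ 2 by positivity))
  have hstd : (gaussObs A x).map (fun ω => (φ ⬝ᵥ ω - φ ⬝ᵥ A *ᵥ x) / euclNorm φ) =
      gaussianReal 0 1 :=
    calc (gaussObs A x).map (fun ω => (φ ⬝ᵥ ω - φ ⬝ᵥ A *ᵥ x) / euclNorm φ)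
        = (((gaussObs A x).map (φ ⬝ᵥ ·)).map (· - φ ⬝ᵥ A *ᵥ x)).map (· / euclNorm φ) := by
          rw [Measure.map_map (by fun_prop) (measurable_dotProduct_left φ),
            Measure.map_map (by fun_prop) (by fun_prop)]
          rfl
      _ = gaussianReal 0 1 := by
          rw [map_dotProduct_gaussObs, gaussianReal_map_sub_const, gaussianReal_map_div_const,
            sub_self, zero_div, hvar]
  rw [← gaussianReal_Ioi, ← hstd, Measure.map_apply
    (((measurable_dotProduct_left φ).sub_const _).div_const _) measurableSet_Ioi]
  simp only [preimage, mem_Ioi, lt_div_iff₀ hpos, dotProduct_sub]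

lemma gaussObs_setOf_lt_abs_dotProduct_sub_le (φ : Fin L → ℝ) (t : ℝ) :
    gaussObs A x {ω | t * euclNorm φ < |φ ⬝ᵥ (ω - A *ᵥ x)|} ≤
      2 * ENNReal.ofReal (gaussTail t) := by
  rcases eq_or_ne φ 0 with rfl | hφ
  · simp only [euclNorm_zero, mul_zero, zero_dotProduct, abs_zero, lt_irrefl, ofPred_false,
      measure_empty, zero_le]
  calc gaussObs A x {ω | t * euclNorm φ < |φ ⬝ᵥ (ω - A *ᵥ x)|}
      ≤ gaussObs A x ({ω | t * euclNorm φ < φ ⬝ᵥ (ω - A *ᵥ x)} ∪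
          {ω | t * euclNorm (-φ) < (-φ) ⬝ᵥ (ω - A *ᵥ x)}) := by
        refine measure_mono fun ω hω => ?_
        rwa [mem_union, mem_ofPred_eq, mem_ofPred_eq, euclNorm_neg, neg_dotProduct, ← lt_abs]
    _ ≤ gaussObs A x {ω | t * euclNorm φ < φ ⬝ᵥ (ω - A *ᵥ x)} +
          gaussObs A x {ω | t * euclNorm (-φ) < (-φ) ⬝ᵥ (ω - A *ᵥ x)} := measure_union_le _ _
    _ = 2 * ENNReal.ofReal (gaussTail t) := by
        rw [gaussObs_setOf_lt_dotProduct_sub A x hφ,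
          gaussObs_setOf_lt_dotProduct_sub A x (neg_ne_zero.2 hφ), two_mul]

end Observation

section SaddlePoint

variable {L n : ℕ} (A : Matrix (Fin L) (Fin n) ℝ) (g : Fin n → ℝ) {r : ℝ}

lemma gaussPhi_eq (r : ℝ) (x y : Fin n → ℝ) (φ : Fin L → ℝ) {α : ℝ} (hα : α ≠ 0) :
    gaussPhi A g r x y φ α =
      g ⬝ᵥ (x - y) - φ ⬝ᵥ A *ᵥ (x - y) + (euclNorm φ ^ 2 / α + 2 * α * r) := by
  have hneg (ω : Fin L → ℝ) : -(φ ⬝ᵥ ω) / α = (-α⁻¹ • φ) ⬝ᵥ ω := by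
    rw [smul_dotProduct, smul_eq_mul, neg_mul, neg_div, inv_mul_eq_div]
  have hpos (ω : Fin L → ℝ) : φ ⬝ᵥ ω / α = (α⁻¹ • φ) ⬝ᵥ ω := by
    rw [smul_dotProduct, smul_eq_mul, inv_mul_eq_div]
  simp only [gaussPhi, hneg, hpos, ← integral_gaussObs, integral_exp_dotProduct_gaussObs,
    Real.log_exp]
  simp only [euclNorm_smul, smul_dotProduct, smul_eq_mul, mulVec_sub, dotProduct_sub, mul_pow,
    sq_abs]
  field_simp
  ring

lemma le_gaussPhi (hr : 0 ≤ r) {x y : Fin n → ℝ}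
    (hxy : euclNorm (A *ᵥ (x - y)) ≤ 2 * √(2 * r)) (φ : Fin L → ℝ) {α : ℝ} (hα : 0 < α) :
    g ⬝ᵥ (x - y) ≤ gaussPhi A g r x y φ α := by
  have hcs : φ ⬝ᵥ A *ᵥ (x - y) ≤ euclNorm φ * (2 * √(2 * r)) :=
    (dotProduct_le_euclNorm_mul_euclNorm φ _).trans
      (mul_le_mul_of_nonneg_left hxy (euclNorm_nonneg φ))
  have hamgm : euclNorm φ * (2 * √(2 * r)) ≤ euclNorm φ ^ 2 / α + 2 * α * r := by
    have hsq : √(2 * r) ^ 2 = 2 * r := Real.sq_sqrt (by positivity)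
    have hnonneg : 0 ≤ (euclNorm φ - α * √(2 * r)) ^ 2 / α := by positivity
    have hexpand : (euclNorm φ - α * √(2 * r)) ^ 2 / α =
        euclNorm φ ^ 2 / α + 2 * α * r - euclNorm φ * (2 * √(2 * r)) := by
      rw [sub_sq, mul_pow, hsq]
      field_simp
      ring
    linarith
  rw [gaussPhi_eq A g r x y φ hα.ne']
  linarith

lemma sInf_gaussPhi_of_le (hr : 0 ≤ r) {x y : Fin n → ℝ}
    (hxy : euclNorm (A *ᵥ (x - y)) ≤ 2 * √(2 * r)) :
    sInf {w | ∃ φ : Fin L → ℝ, ∃ α : ℝ, 0 < α ∧ w = gaussPhi A g r x y φ α} =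
      g ⬝ᵥ (x - y) := by
  refine csInf_eq_of_forall_ge_of_forall_gt_exists_lt ⟨_, 0, 1, one_pos, rfl⟩ ?_ ?_
  · rintro _ ⟨φ, α, hα, rfl⟩
    exact le_gaussPhi A g hr hxy φ hα
  · intro w hw
    have hα : 0 < (w - g ⬝ᵥ (x - y)) / (2 * (r + 1)) :=
      div_pos (sub_pos.2 hw) (by positivity)
    refine ⟨_, ⟨0, _, hα, rfl⟩, ?_⟩
    have hcancel : 2 * ((w - g ⬝ᵥ (x - y)) / (2 * (r + 1))) * (r + 1) = w - g ⬝ᵥ (x - y) := by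
      field_simp
    rw [gaussPhi_eq A g r x y 0 hα.ne', euclNorm_zero, zero_dotProduct, zero_pow two_ne_zero,
      zero_div]
    linarith

-- Along `φ = k • A (x - y)`, `α = 2 * k` the value is affine in `k` with negative slope.
lemma not_bddBelow_gaussPhi (hr : 0 ≤ r) {x y : Fin n → ℝ}
    (hxy : 2 * √(2 * r) < euclNorm (A *ᵥ (x - y))) :
    ¬BddBelow {w | ∃ φ : Fin L → ℝ, ∃ α : ℝ, 0 < α ∧ w = gaussPhi A g r x y φ α} := by
  rintro ⟨b, hb⟩
  have hslope : 0 < euclNorm (A *ᵥ (x - y)) ^ 2 / 2 - 4 * r := by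
    have hsq : (2 * √(2 * r)) ^ 2 < euclNorm (A *ᵥ (x - y)) ^ 2 := by gcongr
    rw [mul_pow, Real.sq_sqrt (by positivity)] at hsq
    linarith
  obtain ⟨k, hk⟩ := exists_gt
    (max 0 ((g ⬝ᵥ (x - y) - b) / (euclNorm (A *ᵥ (x - y)) ^ 2 / 2 - 4 * r)))
  obtain ⟨hk₀, hk₁⟩ := max_lt_iff.1 hk
  have hle := hb ⟨k • A *ᵥ (x - y), 2 * k, by positivity, rfl⟩
  have hvalue : gaussPhi A g r x y (k • A *ᵥ (x - y)) (2 * k) =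
      g ⬝ᵥ (x - y) - k * (euclNorm (A *ᵥ (x - y)) ^ 2 / 2 - 4 * r) := by
    rw [gaussPhi_eq A g r x y _ (by positivity), euclNorm_smul, smul_dotProduct, smul_eq_mul,
      ← euclNorm_sq, mul_pow, sq_abs]
    field_simp
    ring
  rw [div_lt_iff₀ hslope] at hk₁
  linarith

/-- The linear map `x ↦ A x` into Euclidean space, so that its norm is the Euclidean one. -/
noncomputable def observationMap : (Fin n → ℝ) →ₗ[ℝ] EuclideanSpace ℝ (Fin L) :=
  (WithLp.linearEquiv 2 ℝ (Fin L → ℝ)).symm.toLinearMap ∘ₗ A.mulVecLin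

lemma norm_observationMap (x : Fin n → ℝ) : ‖observationMap A x‖ = euclNorm (A *ᵥ x) :=
  (euclNorm_eq_norm (A *ᵥ x)).symm

lemma isBounded_dotProduct_image {X : Set (Fin n → ℝ)} (hX : Bornology.IsBounded X) :
    Bornology.IsBounded (dotProductBilin ℝ ℝ g '' X) :=
  isBounded_image_of_continuous hX (dotProductBilin ℝ ℝ g).continuous_of_finiteDimensional

/-- The modulus of continuity of `x ↦ gᵀx` on `X` with respect to the Euclidean distance between
the means `A x`. -/
noncomputable def gaussModulus (X : Set (Fin n → ℝ)) (ρ : ℝ) : ℝ :=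
  modulusOfContinuity (observationMap A) (dotProductBilin ℝ ℝ g) X ρ

lemma gaussPhiStar_eq (X : Set (Fin n → ℝ)) (hr : 0 ≤ r) :
    gaussPhiStar A g X r = gaussModulus A g X (2 * √(2 * r)) / 2 := by
  have hset : {v | ∃ x ∈ X, ∃ y ∈ X,
      v = sInf {w | ∃ φ : Fin L → ℝ, ∃ α : ℝ, 0 < α ∧ w = gaussPhi A g r x y φ α}} =
      {v | ∃ x ∈ X, ∃ y ∈ X, ‖observationMap A (x - y)‖ ≤ 2 * √(2 * r) ∧
        v = dotProductBilin ℝ ℝ g (x - y)} := by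
    ext v
    constructor
    · rintro ⟨x, hx, y, hy, rfl⟩
      rcases le_or_gt (euclNorm (A *ᵥ (x - y))) (2 * √(2 * r)) with hxy | hxy
      · exact ⟨x, hx, y, hy, (norm_observationMap A _).trans_le hxy,
          sInf_gaussPhi_of_le A g hr hxy⟩
      -- On an infeasible pair the real `sInf` has the junk value `0 = g (x - x)`.
      · refine ⟨x, hx, x, hx, ?_, ?_⟩
        · rw [sub_self, map_zero, norm_zero]
          positivity
        · rw [sub_self, map_zero, Real.sInf_of_not_bddBelow (not_bddBelow_gaussPhi A g hr hxy)]
    · rintro ⟨x, hx, y, hy, hxy, rfl⟩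
      rw [norm_observationMap] at hxy
      exact ⟨x, hx, y, hy, (sInf_gaussPhi_of_le A g hr hxy).symm⟩
  rw [gaussPhiStar, hset, one_div_mul_eq_div, gaussModulus, modulusOfContinuity]

end SaddlePoint

section Testing

variable {α : Type*} [MeasurableSpace α] {μ : Measure α} {p q : α → ℝ≥0∞}

lemma lintegral_min_le_withDensity_add_withDensity_compl (s : Set α) :
    ∫⁻ a, min (p a) (q a) ∂μ ≤ μ.withDensity p s + μ.withDensity q sᶜ :=
  calc ∫⁻ a, min (p a) (q a) ∂μ
      = ∫⁻ a in s ∪ sᶜ, min (p a) (q a) ∂μ := by rw [union_compl_self, setLIntegral_univ]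
    _ ≤ (∫⁻ a in s, min (p a) (q a) ∂μ) + ∫⁻ a in sᶜ, min (p a) (q a) ∂μ :=
        lintegral_union_le _ s sᶜ
    _ ≤ (∫⁻ a in s, p a ∂μ) + ∫⁻ a in sᶜ, q a ∂μ := by
        gcongr <;> simp only [min_le_left, min_le_right]
    _ ≤ μ.withDensity p s + μ.withDensity q sᶜ := by
        gcongr <;> exact withDensity_apply_le _ _

lemma withDensity_setOf_lt_add_withDensity_compl (hp : Measurable p) (hq : Measurable q) :
    μ.withDensity p {a | p a < q a} + μ.withDensity q {a | p a < q a}ᶜ =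
      ∫⁻ a, min (p a) (q a) ∂μ := by
  have hs : MeasurableSet {a | p a < q a} := measurableSet_lt hp hq
  rw [withDensity_apply _ hs, withDensity_apply _ hs.compl,
    ← lintegral_add_compl (fun a => min (p a) (q a)) hs]
  congr 1
  · exact setLIntegral_congr_fun hs fun a ha => (min_eq_left (mem_ofPred.1 ha).le).symm
  · exact setLIntegral_congr_fun hs.compl fun a ha =>
      (min_eq_right (not_lt.1 (notMem_ofPred_iff.1 ha))).symm

variable {L n : ℕ} (A : Matrix (Fin L) (Fin n) ℝ)

lemma stdGaussDensity_lt_stdGaussDensity_sub_iff (u v : Fin L → ℝ) :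
    stdGaussDensity u < stdGaussDensity (u - v) ↔
      euclNorm v / 2 * euclNorm v < v ⬝ᵥ u := by
  have hexpand : euclNorm (u - v) ^ 2 = euclNorm u ^ 2 - 2 * (v ⬝ᵥ u) + euclNorm v ^ 2 := by
    rw [euclNorm_sq, euclNorm_sq, euclNorm_sq, sub_dotProduct, dotProduct_sub, dotProduct_sub,
      dotProduct_comm u v]
    ring
  have hconst : 0 < (2 * π) ^ (-(L : ℝ) / 2) := by positivity
  rw [stdGaussDensity_eq, stdGaussDensity_eq, mul_lt_mul_iff_right₀ hconst, Real.exp_lt_exp,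
    hexpand]
  constructor <;> intro h <;> linarith

lemma gaussObs_setOf_density_lt {x y : Fin n → ℝ} (hxy : A *ᵥ (y - x) ≠ 0) :
    gaussObs A x {ω | stdGaussDensity (ω - A *ᵥ x) < stdGaussDensity (ω - A *ᵥ y)} =
      ENNReal.ofReal (gaussTail (euclNorm (A *ᵥ (y - x)) / 2)) := by
  rw [← gaussObs_setOf_lt_dotProduct_sub A x hxy]
  congr 1
  ext ω
  rw [mem_ofPred_eq, mem_ofPred_eq, ← stdGaussDensity_lt_stdGaussDensity_sub_iff, mulVec_sub,
    sub_sub_sub_cancel_right]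

lemma two_mul_gaussTail_le_gaussObs_add_gaussObs_compl (x y : Fin n → ℝ) (s : Set (Fin L → ℝ)) :
    2 * ENNReal.ofReal (gaussTail (euclNorm (A *ᵥ (x - y)) / 2)) ≤
      gaussObs A x s + gaussObs A y sᶜ := by
  rcases eq_or_ne (A *ᵥ (x - y)) 0 with hzero | hne
  · have hobs : gaussObs A y = gaussObs A x := by
      rw [mulVec_sub, sub_eq_zero] at hzero
      rw [gaussObs, gaussObs, hzero]
    have hhalf : 2 * ENNReal.ofReal (1 / 2) = 1 := by
      rw [← ENNReal.ofReal_ofNat, ← ENNReal.ofReal_mul zero_le_two, mul_one_div_cancel two_ne_zero,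
        ENNReal.ofReal_one]
    rw [hobs, hzero, euclNorm_zero, zero_div, gaussTail_zero, hhalf,
      ← measure_univ (μ := gaussObs A x), ← union_compl_self s]
    exact measure_union_le _ _
  have hsymm : A *ᵥ (y - x) = -(A *ᵥ (x - y)) := by rw [← mulVec_neg, neg_sub]
  have hlt (m m' ω : Fin L → ℝ) :
      ENNReal.ofReal (stdGaussDensity (ω - m)) < ENNReal.ofReal (stdGaussDensity (ω - m')) ↔
        stdGaussDensity (ω - m) < stdGaussDensity (ω - m') :=
    ENNReal.ofReal_lt_ofReal_iff_of_nonneg (stdGaussDensity_nonneg _)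
  calc 2 * ENNReal.ofReal (gaussTail (euclNorm (A *ᵥ (x - y)) / 2))
      = gaussObs A x {ω | stdGaussDensity (ω - A *ᵥ x) < stdGaussDensity (ω - A *ᵥ y)} +
          gaussObs A y {ω | stdGaussDensity (ω - A *ᵥ y) < stdGaussDensity (ω - A *ᵥ x)} := by
        rw [gaussObs_setOf_density_lt A hne,
          gaussObs_setOf_density_lt A (hsymm ▸ neg_ne_zero.2 hne), hsymm, euclNorm_neg, two_mul]
    _ ≤ gaussObs A x {ω | stdGaussDensity (ω - A *ᵥ x) < stdGaussDensity (ω - A *ᵥ y)} +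
          gaussObs A y {ω | stdGaussDensity (ω - A *ᵥ x) < stdGaussDensity (ω - A *ᵥ y)}ᶜ := by
        gcongr
        exact fun ω hω => not_lt.2 (mem_ofPred.1 hω).le
    _ = ∫⁻ ω, min (ENNReal.ofReal (stdGaussDensity (ω - A *ᵥ x)))
          (ENNReal.ofReal (stdGaussDensity (ω - A *ᵥ y))) := by
        rw [← withDensity_setOf_lt_add_withDensity_compl
          (measurable_stdGaussDensity_sub _).ennreal_ofReal
          (measurable_stdGaussDensity_sub _).ennreal_ofReal]
        simp only [hlt, gaussObs]
    _ ≤ gaussObs A x s + gaussObs A y sᶜ :=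
        lintegral_min_le_withDensity_add_withDensity_compl s

end Testing

section Domination

variable {L n : ℕ} (A : Matrix (Fin L) (Fin n) ℝ)

lemma stdGaussDensity_sub_le (ω m : Fin L → ℝ) :
    stdGaussDensity (ω - m) ≤
      exp (euclNorm m ^ 2 / 2) * stdGaussDensity ((√2)⁻¹ • ω) := by
  have hpar : euclNorm ω ^ 2 ≤ 2 * euclNorm (ω - m) ^ 2 + 2 * euclNorm m ^ 2 := by
    have hnonneg : 0 ≤ (ω - m - m) ⬝ᵥ (ω - m - m) := euclNorm_sq (ω - m - m) ▸ sq_nonneg _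
    simp only [euclNorm_sq, dotProduct_sub, sub_dotProduct] at hnonneg ⊢
    linarith
  rw [stdGaussDensity_eq, stdGaussDensity_eq, mul_left_comm, ← Real.exp_add, euclNorm_smul,
    mul_pow, sq_abs, inv_pow, Real.sq_sqrt zero_le_two]
  gcongr
  linarith

lemma integrable_stdGaussDensity : Integrable (stdGaussDensity (L := L)) := by
  have hprod (ω : Fin L → ℝ) : stdGaussDensity ω = ∏ i, gaussianPDFReal 0 1 (ω i) := by
    simpa only [sub_zero, Pi.zero_apply] using stdGaussDensity_sub_eq_prod ω 0
  rw [funext hprod]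
  exact Integrable.fintype_prod fun _ => integrable_gaussianPDFReal 0 1

lemma exists_isFiniteMeasure_forall_gaussObs_le {X : Set (Fin n → ℝ)}
    (hX : Bornology.IsBounded X) :
    ∃ ν : Measure (Fin L → ℝ), IsFiniteMeasure ν ∧ ∀ x ∈ X, gaussObs A x ≤ ν := by
  obtain ⟨C, hC⟩ := (isBounded_image_of_continuous hX
    (show Continuous fun x => exp (‖observationMap A x‖ ^ 2 / 2) from by
      have := (observationMap A).continuous_of_finiteDimensional
      fun_prop)).exists_norm_le
  refine ⟨volume.withDensity fun ω => ENNReal.ofReal (C * stdGaussDensity ((√2)⁻¹ • ω)),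
    isFiniteMeasure_withDensity_ofReal
      ((integrable_stdGaussDensity.comp_smul (by positivity)).const_mul C).2,
    fun x hx => withDensity_mono (ae_of_all _ fun ω => ENNReal.ofReal_le_ofReal ?_)⟩
  refine (stdGaussDensity_sub_le ω _).trans
    (mul_le_mul_of_nonneg_right ?_ (stdGaussDensity_nonneg _))
  rw [← norm_observationMap]
  exact (le_norm_self _).trans (hC _ (mem_image_of_mem _ hx))

lemma exists_measure_setOf_lt_abs_lt {α : Type*} [MeasurableSpace α] (ν : Measure α)
    [IsFiniteMeasure ν] {f : α → ℝ} (hf : Measurable f) {η : ℝ≥0∞} (hη : 0 < η) :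
    ∃ r : ℝ, ν {a | r < |f a|} < η := by
  have htail := tendsto_measure_norm_gt_of_isTightMeasureSet
    (isTightMeasureSet_singleton (μ := ν.map f))
  obtain ⟨r, hr⟩ := (htail.eventually_lt_const hη).exists
  rw [iSup_singleton, Measure.map_apply hf (measurableSet_lt measurable_const measurable_norm)]
    at hr
  exact ⟨r, hr⟩

end Domination

section Risk

variable {L n : ℕ} (A : Matrix (Fin L) (Fin n) ℝ) (g : Fin n → ℝ) {X : Set (Fin n → ℝ)}
  {ghat : (Fin L → ℝ) → ℝ} {δ ε : ℝ}

/-- The largest probability over `x ∈ X` that the estimate `ghat` misses `gᵀx` by more than `δ`,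
so that the `ε`-risk is the infimum of the `δ` for which it is less than `ε`. -/
noncomputable def worstCaseError (X : Set (Fin n → ℝ)) (ghat : (Fin L → ℝ) → ℝ) (δ : ℝ) : ℝ≥0∞ :=
  ⨆ x ∈ X, gaussObs A x {ω | δ < |ghat ω - g ⬝ᵥ x|}

lemma nonneg_of_worstCaseError_lt_one (hX : X.Nonempty)
    (hδ : worstCaseError A g X ghat δ < 1) : 0 ≤ δ := by
  by_contra! hneg
  obtain ⟨x, hx⟩ := hX
  have hall : {ω | δ < |ghat ω - g ⬝ᵥ x|} = univ :=
    eq_univ_of_forall fun ω => hneg.trans_le (abs_nonneg _)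
  have hone : gaussObs A x {ω | δ < |ghat ω - g ⬝ᵥ x|} = 1 := by rw [hall, measure_univ]
  exact hδ.not_ge (hone ▸ le_iSup₂_of_le x hx le_rfl)

lemma gaussRisk_le (hX : X.Nonempty) (hε : ε ≤ 1)
    (hδ : worstCaseError A g X ghat δ < ENNReal.ofReal ε) : gaussRisk A g X ghat ε ≤ δ :=
  csInf_le ⟨0, fun _ h => nonneg_of_worstCaseError_lt_one A g hX
    (lt_of_lt_of_le h (ENNReal.ofReal_le_one.2 hε))⟩ hδ

lemma exists_dotProduct_eq_strongDual (φ : StrongDual ℝ (EuclideanSpace ℝ (Fin L))) :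
    ∃ w : Fin L → ℝ, euclNorm w = ‖φ‖ ∧ ∀ v, φ (WithLp.toLp 2 v) = w ⬝ᵥ v := by
  refine ⟨((InnerProductSpace.toDual ℝ _).symm φ).ofLp, ?_, fun v => ?_⟩
  · rw [euclNorm_eq_norm, WithLp.toLp_ofLp, LinearIsometryEquiv.norm_map]
  · rw [← InnerProductSpace.toDual_symm_apply, EuclideanSpace.inner_eq_star_dotProduct,
      star_trivial, dotProduct_comm]

lemma worstCaseError_affine_lt {φ : Fin L → ℝ} {c M : ℝ} (hε : ε ∈ Ioc 0 2)
    (hM : ∀ x ∈ X, |g ⬝ᵥ x - φ ⬝ᵥ A *ᵥ x - c| ≤ M - √(2 * log (2 / ε)) * euclNorm φ) :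
    worstCaseError A g X (fun ω => φ ⬝ᵥ ω + c) M < ENNReal.ofReal ε := by
  have hpos : 0 < ε := hε.1
  refine lt_of_le_of_lt (iSup₂_le fun x hx => ?_) (show 2 * ENNReal.ofReal (ε / 4) < _ from ?_)
  · refine (measure_mono fun ω hω => ?_).trans
      ((gaussObs_setOf_lt_abs_dotProduct_sub_le A x φ √(2 * log (2 / ε))).trans ?_)
    · have htri := abs_sub (φ ⬝ᵥ (ω - A *ᵥ x)) (g ⬝ᵥ x - φ ⬝ᵥ A *ᵥ x - c)
      have herr : φ ⬝ᵥ (ω - A *ᵥ x) - (g ⬝ᵥ x - φ ⬝ᵥ A *ᵥ x - c) =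
          φ ⬝ᵥ ω + c - g ⬝ᵥ x := by
        rw [dotProduct_sub]
        ring
      rw [herr] at htri
      rw [mem_ofPred_eq] at hω ⊢
      linarith [hM x hx]
    · gcongr
      exact gaussTail_sqrt_log_le hε
  · rw [← ENNReal.ofReal_ofNat, ← ENNReal.ofReal_mul zero_le_two,
      ENNReal.ofReal_lt_ofReal_iff hpos]
    linarith

lemma exists_affine_gaussRisk_le_gaussModulus (hX : X.Nonempty) (hXb : Bornology.IsBounded X)
    (hXc : Convex ℝ X) (hε : ε ∈ Ioc 0 1) :
    ∃ (φ : Fin L → ℝ) (c : ℝ), gaussRisk A g X (fun ω => φ ⬝ᵥ ω + c) ε ≤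
      gaussModulus A g X (2 * √(2 * log (2 / ε))) / 2 := by
  have hlog : 0 < log (2 / ε) := Real.log_pos ((one_lt_div hε.1).2 (by linarith [hε.2]))
  obtain ⟨φ, hφ⟩ := exists_strongDual_map_sub_le_modulusOfContinuity (T := observationMap A)
    (ρ := 2 * √(2 * log (2 / ε))) hX hXc
    (isBounded_dotProduct_image g hXb) (by positivity)
  obtain ⟨w, hwnorm, hw⟩ := exists_dotProduct_eq_strongDual φ
  obtain ⟨c, hc⟩ := exists_forall_abs_sub_le (s := X) (h := fun x => g ⬝ᵥ x - w ⬝ᵥ A *ᵥ x)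
    (B := gaussModulus A g X (2 * √(2 * log (2 / ε))) / 2 - √(2 * log (2 / ε)) * euclNorm w)
    fun x hx y hy => by
      have hxy : g ⬝ᵥ (x - y) - w ⬝ᵥ A *ᵥ (x - y) + 2 * √(2 * log (2 / ε)) * euclNorm w ≤
          gaussModulus A g X (2 * √(2 * log (2 / ε))) := by
        rw [← hw, hwnorm]
        exact hφ x hx y hy
      rw [dotProduct_sub, mulVec_sub, dotProduct_sub] at hxy
      linarith
  exact ⟨w, c, gaussRisk_le A g hX hε.2
    (worstCaseError_affine_lt A g ⟨hε.1, by linarith [hε.2]⟩ hc)⟩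

lemma dotProduct_sub_le_two_mul_of_worstCaseError_lt (hε : ε ∈ Ioo 0 1)
    (hδ : worstCaseError A g X ghat δ < ENNReal.ofReal ε) {x y : Fin n → ℝ} (hx : x ∈ X)
    (hy : y ∈ X) (hxy : euclNorm (A *ᵥ (x - y)) ≤ 2 * erfInv ε) : g ⬝ᵥ (x - y) ≤ 2 * δ := by
  by_contra! hsep
  rw [dotProduct_sub] at hsep
  have herr {z : Fin n → ℝ} (hz : z ∈ X) {s : Set (Fin L → ℝ)}
      (hs : ∀ ω ∈ s, δ < |ghat ω - g ⬝ᵥ z|) : gaussObs A z s < ENNReal.ofReal ε :=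
    ((measure_mono hs).trans (le_iSup₂_of_le z hz le_rfl)).trans_lt hδ
  have hmissx : gaussObs A x {ω | ghat ω < g ⬝ᵥ x - δ} < ENNReal.ofReal ε :=
    herr hx fun ω hω => lt_abs.2 (Or.inr (by linarith [mem_ofPred.1 hω]))
  have hmissy : gaussObs A y {ω | ghat ω < g ⬝ᵥ x - δ}ᶜ < ENNReal.ofReal ε :=
    herr hy fun ω hω => lt_abs.2 (Or.inl (by linarith [not_lt.1 (notMem_ofPred_iff.1 hω)]))
  have hle : 2 * ENNReal.ofReal ε ≤
      gaussObs A x {ω | ghat ω < g ⬝ᵥ x - δ} + gaussObs A y {ω | ghat ω < g ⬝ᵥ x - δ}ᶜ := by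
    refine le_trans ?_ (two_mul_gaussTail_le_gaussObs_add_gaussObs_compl A x y _)
    gcongr
    calc ε = gaussTail (erfInv ε) := (gaussTail_erfInv hε).symm
      _ ≤ gaussTail (euclNorm (A *ᵥ (x - y)) / 2) := antitone_gaussTail (by linarith)
  rw [two_mul] at hle
  exact hle.not_gt (ENNReal.add_lt_add hmissx hmissy)

lemma exists_worstCaseError_lt (hXb : Bornology.IsBounded X) (hε : 0 < ε)
    (hghat : Measurable ghat) : ∃ δ, worstCaseError A g X ghat δ < ENNReal.ofReal ε := by
  obtain ⟨ν, hν, hle⟩ := exists_isFiniteMeasure_forall_gaussObs_le A hXb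
  obtain ⟨r, hr⟩ := exists_measure_setOf_lt_abs_lt ν hghat (ENNReal.ofReal_pos.2 hε)
  obtain ⟨C, hC⟩ := (isBounded_dotProduct_image g hXb).exists_norm_le
  refine ⟨r + C, (iSup₂_le fun x hx => ?_).trans_lt hr⟩
  refine (hle x hx _).trans (measure_mono fun ω hω => ?_)
  have hgx : |g ⬝ᵥ x| ≤ C := hC _ (mem_image_of_mem _ hx)
  rw [mem_ofPred_eq] at hω ⊢
  linarith [abs_sub (ghat ω) (g ⬝ᵥ x)]

lemma gaussModulus_div_two_le_gaussRiskStar (hX : X.Nonempty) (hXb : Bornology.IsBounded X)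
    (hε : ε ∈ Ioo 0 (1 / 2)) :
    gaussModulus A g X (2 * erfInv ε) / 2 ≤ gaussRiskStar A g X ε := by
  refine le_csInf ⟨_, 0, measurable_zero, rfl⟩ ?_
  rintro _ ⟨ghat, hghat, rfl⟩
  refine le_csInf (exists_worstCaseError_lt A g hXb hε.1 hghat) fun δ hδ => ?_
  rw [div_le_iff₀' two_pos]
  refine modulusOfContinuity_le hX (by linarith [erfInv_pos hε]) fun x hx y hy hxy => ?_
  exact dotProduct_sub_le_two_mul_of_worstCaseError_lt A g ⟨hε.1, by linarith [hε.2]⟩ hδ hx hy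
    ((norm_observationMap A _).symm.trans_le hxy)

end Risk

theorem gauss_affine_estimate_near_optimal_general {L n : ℕ}
    (A : Matrix (Fin L) (Fin n) ℝ) (g : Fin n → ℝ) (X : Set (Fin n → ℝ))
    (hXne : X.Nonempty) (hXb : Bornology.IsBounded X) (hXcv : Convex ℝ X)
    (ε : ℝ) (hε : ε ∈ Set.Ioo (0 : ℝ) (1 / 2)) :
    (∃ (φ : Fin L → ℝ) (c : ℝ),
      gaussRisk A g X (fun ω => φ ⬝ᵥ ω + c) ε ≤ gaussPhiStar A g X (Real.log (2 / ε))
      ∧ gaussRisk A g X (fun ω => φ ⬝ᵥ ω + c) ε ≤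
          (Real.sqrt (2 * Real.log (2 / ε)) / erfInv ε) * gaussRiskStar A g X ε)
    ∧ Tendsto (fun t : ℝ => Real.sqrt (2 * Real.log (2 / t)) / erfInv t)
        (nhdsWithin 0 (Set.Ioi 0)) (nhds 1) := by
  refine ⟨?_, tendsto_sqrt_log_div_erfInv⟩
  have hε' : ε ∈ Ioo 0 1 := ⟨hε.1, by linarith [hε.2]⟩
  have hlog : 0 ≤ log (2 / ε) := Real.log_nonneg ((one_le_div hε.1).2 (by linarith [hε.2]))
  have hq : 0 < erfInv ε := erfInv_pos hε
  obtain ⟨φ, c, hrisk⟩ :=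
    exists_affine_gaussRisk_le_gaussModulus A g hXne hXb hXcv ⟨hε.1, hε'.2.le⟩
  refine ⟨φ, c, hrisk.trans_eq (gaussPhiStar_eq A g X hlog).symm, hrisk.trans ?_⟩
  calc gaussModulus A g X (2 * √(2 * log (2 / ε))) / 2
      ≤ 2 * √(2 * log (2 / ε)) / (2 * erfInv ε) * gaussModulus A g X (2 * erfInv ε) / 2 := by
        gcongr
        exact modulusOfContinuity_le_div_mul hXne hXcv (isBounded_dotProduct_image g hXb)
          (by positivity) (by linarith [erfInv_le_sqrt_log hε'])
    _ = √(2 * log (2 / ε)) / erfInv ε * (gaussModulus A g X (2 * erfInv ε) / 2) := by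
        rw [mul_div_mul_left _ _ two_ne_zero, mul_div_assoc]
    _ ≤ √(2 * log (2 / ε)) / erfInv ε * gaussRiskStar A g X ε := by
        gcongr
        exact gaussModulus_div_two_le_gaussRiskStar A g hXne hXb hε

/-- **Proposition 4.1.** In the Gaussian observation model `ω = Ax + ξ`,
`ξ ∼ N(0, I_L)`, for every `ε ∈ (0, 1/2)` there is an affine estimate `ĝ_ε` with
`ε`-risk at most `Φ_*(ln(2/ε))` satisfying
`Risk(ĝ_ε; ε) ≤ ψ(ε)·Risk_*(ε)` with `ψ(ε) = √(2 ln(2/ε))/ErfInv(ε)`;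
moreover `ψ(ε) → 1` as `ε → 0⁺`. -/
theorem gauss_affine_estimate_near_optimal {L n : ℕ}
    (A : Matrix (Fin L) (Fin n) ℝ) (g : Fin n → ℝ) (X : Set (Fin n → ℝ))
    (hXne : X.Nonempty) (hXcp : IsCompact X) (hXcv : Convex ℝ X)
    (ε : ℝ) (hε : ε ∈ Set.Ioo (0 : ℝ) (1/2)) :
    (∃ (φ : Fin L → ℝ) (c : ℝ),
      gaussRisk A g X (fun ω => φ ⬝ᵥ ω + c) ε ≤ gaussPhiStar A g X (Real.log (2 / ε))
      ∧ gaussRisk A g X (fun ω => φ ⬝ᵥ ω + c) ε ≤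
          (Real.sqrt (2 * Real.log (2 / ε)) / erfInv ε) * gaussRiskStar A g X ε)
    ∧ Tendsto (fun t : ℝ => Real.sqrt (2 * Real.log (2 / t)) / erfInv t)
        (nhdsWithin 0 (Set.Ioi 0)) (nhds 1) :=
  gauss_affine_estimate_near_optimal_general A g X hXne hXcp.isBounded hXcv ε hε
end

section
/- (Proposition 5.1, bound (5.2)) Let (D, F) be a good pair, let X¹ ⊆ X² ⊆ ⋯ ⊆ X^K be a nested collection of nonempty convex compact sets in ℝⁿ with A(X^K) ⊆ M, A affine, g ∈ ℝⁿ, ε ∈ (0, 1/4) and δ > 0. For each k let Φ_*^k denote the saddle-point function associated with X^k, and let ĝ^k be estimates satisfying sup_{x∈X^k} Prob_{ω∼p_{A(x)}·P}{|ĝ^k(ω) − gᵀx| > Φ_*^k(ln(2K/ε)) + δ} < ε/K for k = 1,…,K. Define the adaptive estimate ĝ(ω) = ĝ^{k(ω)}(ω), where k(ω) is the smallest index k that is ω-good, i.e., such that |ĝ^{k′}(ω) − ĝ^k(ω)| ≤ Φ_*^k(ln(2K/ε)) + Φ_*^{k′}(ln(2K/ε)) + 2δ for all k′ with k ≤ k′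 ≤ K. Then with ϑ = 3·ln(2K/ε)/ln(2/ε), for every k with 1 ≤ k ≤ K: sup_{x∈X^k} Prob_{ω∼p_{A(x)}·P}{|ĝ(ω) − gᵀx| > ϑ·Φ_*^k(ln(2/ε)) + 3δ} < ε. -/
open MeasureTheory Real Matrix Set
open scoped ENNReal

/-- A "good pair" `(𝒟, ℱ)` in the sense of Juditsky–Nemirovski:
a parametric family of positive probability densities `p μ`, `μ ∈ M`, on `(Ω, P)`,
together with a finite-dimensional linear space `F` of Borel functions on `Ω`
containing the constants, such that log-likelihood ratios belong to `F` and
`μ ↦ ln ∫ e^{φ} p_μ dP` is well defined (finite, witnessed by integrability)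
and concave on `M` for every `φ ∈ F`. -/
structure GoodPair (Ω : Type*) [MeasurableSpace Ω] (P : Measure Ω)
    (E : Type*) [NormedAddCommGroup E] [NormedSpace ℝ E] where
  M : Set E
  p : E → Ω → ℝ
  F : Submodule ℝ (Ω → ℝ)
  M_open : IsOpen M
  M_convex : Convex ℝ M
  p_meas : ∀ μ ∈ M, Measurable (p μ)
  p_pos : ∀ μ ∈ M, ∀ ω, 0 < p μ ω
  p_prob : ∀ μ ∈ M, ∫ ω, p μ ω ∂P = 1
  F_fd : FiniteDimensional ℝ F
  F_meas : ∀ φ ∈ F, Measurable φ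
  F_const : ∀ c : ℝ, (fun _ : Ω => c) ∈ F
  logratio_mem : ∀ μ ∈ M, ∀ ν ∈ M, (fun ω => Real.log (p μ ω / p ν ω)) ∈ F
  F_finite : ∀ φ ∈ F, ∀ μ ∈ M, Integrable (fun ω => Real.exp (φ ω) * p μ ω) P
  F_concave : ∀ φ ∈ F,
    ConcaveOn ℝ M (fun μ => Real.log (∫ ω, Real.exp (φ ω) * p μ ω ∂P))

variable {Ω : Type*} [MeasurableSpace Ω] {P : Measure Ω}
  {E : Type*} [NormedAddCommGroup E] [NormedSpace ℝ E] {n : ℕ}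

/-- The distribution of the observation when the parameter is `μ`:
the measure with density `p μ` with respect to `P`. -/
noncomputable def obsMeasure (D : GoodPair Ω P E) (μ : E) : Measure Ω :=
  P.withDensity fun ω => ENNReal.ofReal (D.p μ ω)

/-- The `ε`-risk of an estimate `ghat` of the linear form `gᵀx`, `x ∈ X`:
`inf {δ | sup_{x ∈ X} Prob_{ω ∼ p_{A(x)}·P} {|ghat ω - gᵀx| > δ} < ε}`. -/
noncomputable def Risk (D : GoodPair Ω P E) (A : (Fin n → ℝ) →ᵃ[ℝ] E)
    (g : Fin n → ℝ) (X : Set (Fin n → ℝ)) (ghat : Ω → ℝ) (ε : ℝ) : ℝ :=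
  sInf {δ : ℝ |
    (⨆ x ∈ X, obsMeasure D (A x) {ω | δ < |ghat ω - g ⬝ᵥ x|}) < ENNReal.ofReal ε}

/-- The minimax optimal `ε`-risk over all (Borel) estimates. -/
noncomputable def RiskStar (D : GoodPair Ω P E) (A : (Fin n → ℝ) →ᵃ[ℝ] E)
    (g : Fin n → ℝ) (X : Set (Fin n → ℝ)) (ε : ℝ) : ℝ :=
  sInf {ρ : ℝ | ∃ ghat : Ω → ℝ, Measurable ghat ∧ ρ = Risk D A g X ghat ε}

/-- The minimax optimal `ε`-risk over affine estimates, i.e. estimates `φ ∈ F`. -/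
noncomputable def RiskAff (D : GoodPair Ω P E) (A : (Fin n → ℝ) →ᵃ[ℝ] E)
    (g : Fin n → ℝ) (X : Set (Fin n → ℝ)) (ε : ℝ) : ℝ :=
  sInf {ρ : ℝ | ∃ φ ∈ D.F, ρ = Risk D A g X φ ε}

/-- The function `Φ_r(x, y; φ, α)`. -/
noncomputable def PhiFun (D : GoodPair Ω P E) (A : (Fin n → ℝ) →ᵃ[ℝ] E)
    (g : Fin n → ℝ) (r : ℝ) (x y : Fin n → ℝ) (φ : Ω → ℝ) (α : ℝ) : ℝ :=
  g ⬝ᵥ x - g ⬝ᵥ y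
    + α * Real.log (∫ ω, Real.exp (φ ω / α) * D.p (A y) ω ∂P)
    + α * Real.log (∫ ω, Real.exp (-φ ω / α) * D.p (A x) ω ∂P)
    + 2 * α * r

/-- `Φ_*(r)` defined through the sup-inf value:
`2Φ_*(r) = sup_{x,y ∈ X} inf_{φ ∈ F, α > 0} Φ_r(x, y; φ, α)`. -/
noncomputable def PhiStarSI (D : GoodPair Ω P E) (A : (Fin n → ℝ) →ᵃ[ℝ] E)
    (g : Fin n → ℝ) (X : Set (Fin n → ℝ)) (r : ℝ) : ℝ :=
  (1/2) * sSup {v : ℝ | ∃ x ∈ X, ∃ y ∈ X,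
    v = sInf {w : ℝ | ∃ φ ∈ D.F, ∃ α : ℝ, 0 < α ∧ w = PhiFun D A g r x y φ α}}

/-- `Φ_*(r)` defined through the inf-sup value:
`2Φ_*(r) = inf_{φ ∈ F, α > 0} sup_{x,y ∈ X} Φ_r(x, y; φ, α)`. -/
noncomputable def PhiStarIS (D : GoodPair Ω P E) (A : (Fin n → ℝ) →ᵃ[ℝ] E)
    (g : Fin n → ℝ) (X : Set (Fin n → ℝ)) (r : ℝ) : ℝ :=
  (1/2) * sInf {v : ℝ | ∃ φ ∈ D.F, ∃ α : ℝ, 0 < α ∧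
    v = sSup {w : ℝ | ∃ x ∈ X, ∃ y ∈ X, w = PhiFun D A g r x y φ α}}

/-- `k` is an `ω`-good index for the family of estimates `ghatk` with
thresholds `thresh`: `|ĝ^{k'}(ω) − ĝ^k(ω)| ≤ thresh k + thresh k' + 2δ`
for all `k ≤ k' < K`. -/
def isGoodIdx {Ω' : Type*} (K : ℕ) (ghatk : ℕ → Ω' → ℝ) (thresh : ℕ → ℝ)
    (δ : ℝ) (ω : Ω') (k : ℕ) : Prop :=
  k < K ∧ ∀ k', k ≤ k' → k' < K →
    |ghatk k' ω - ghatk k ω| ≤ thresh k + thresh k' + 2 * δ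

/-- The smallest `ω`-good index. -/
noncomputable def kSel {Ω' : Type*} (K : ℕ) (ghatk : ℕ → Ω' → ℝ) (thresh : ℕ → ℝ)
    (δ : ℝ) (ω : Ω') : ℕ :=
  sInf {k | isGoodIdx K ghatk thresh δ ω k}

/-- The Lepskii-type adaptive estimate `ĝ(ω) = ĝ^{k(ω)}(ω)`. -/
noncomputable def adaptEst {Ω' : Type*} (K : ℕ) (ghatk : ℕ → Ω' → ℝ)
    (thresh : ℕ → ℝ) (δ : ℝ) (ω : Ω') : ℝ :=
  ghatk (kSel K ghatk thresh δ ω) ω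

/-!
`Φ_*` is half an infimum over `(φ, α)` of functions that are affine in `r`, so it is concave. On
the diagonal `x = y` the two logarithms in `Φ_r` sum to something nonnegative by Jensen's
inequality, so `Φ_* ≥ 0`; together these give `Φ_*(θ r) ≤ θ Φ_*(r)` for `θ ≥ 1`. On the other hand,
if every estimate `ĝ^j` with `j ≥ k` is within its threshold of the truth, then `k` is a good index,
hence the selected index is at most `k`, and goodness compares `ĝ` with `ĝ^k` at the cost of two
more thresholds, both at most that of `k` because `Φ_*` increases with the set. A union bound over
`j ≥ k` concludes.
-/

section ConcavityAndJensen

lemma map_smul_le_smul_of_concaveOn {𝕜 V β : Type*} [Field 𝕜] [LinearOrder 𝕜]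
    [IsStrictOrderedRing 𝕜] [AddCommGroup V] [Module 𝕜 V] [AddCommGroup β] [PartialOrder β]
    [IsOrderedAddMonoid β] [Module 𝕜 β] [PosSMulMono 𝕜 β] {s : Set V} {f : V → β}
    (hf : ConcaveOn 𝕜 s f) (h0 : 0 ∈ s) (hf0 : 0 ≤ f 0) {θ : 𝕜} (hθ : 1 ≤ θ) {x : V}
    (hx : θ • x ∈ s) : f (θ • x) ≤ θ • f x := by
  have hθ0 : 0 < θ := one_pos.trans_le hθ
  have hθ1 : 0 ≤ 1 - θ⁻¹ := sub_nonneg.2 (inv_le_one_of_one_le₀ hθ)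
  rw [← inv_smul_le_iff_of_pos hθ0]
  calc θ⁻¹ • f (θ • x) ≤ θ⁻¹ • f (θ • x) + (1 - θ⁻¹) • f 0 :=
        le_add_of_nonneg_right (smul_nonneg hθ1 hf0)
    _ ≤ f (θ⁻¹ • θ • x + (1 - θ⁻¹) • (0 : V)) :=
        hf.2 hx h0 (inv_nonneg.2 hθ0.le) hθ1 (add_sub_cancel _ _)
    _ = f x := by rw [smul_zero, add_zero, inv_smul_smul₀ hθ0.ne']

variable {Q : Measure Ω} [IsProbabilityMeasure Q] {X : Ω → ℝ}

lemma integral_le_log_integral_exp (hX : Integrable X Q)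
    (hexp : Integrable (fun ω => Real.exp (X ω)) Q) :
    ∫ ω, X ω ∂Q ≤ Real.log (∫ ω, Real.exp (X ω) ∂Q) := by
  have hJensen : Real.exp (∫ ω, X ω ∂Q) ≤ ∫ ω, Real.exp (X ω) ∂Q :=
    convexOn_exp.map_integral_le continuous_exp.continuousOn isClosed_univ
      (Filter.Eventually.of_forall fun _ => mem_univ _) hX hexp
  exact (le_log_iff_exp_le ((exp_pos _).trans_le hJensen)).2 hJensen

lemma log_integral_exp_add_log_integral_exp_neg_nonneg
    (hexp : Integrable (fun ω => Real.exp (X ω)) Q)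
    (hexp_neg : Integrable (fun ω => Real.exp (-X ω)) Q) :
    0 ≤ Real.log (∫ ω, Real.exp (X ω) ∂Q) + Real.log (∫ ω, Real.exp (-X ω) ∂Q) := by
  have hX : Integrable X Q := by
    simpa using ProbabilityTheory.integrable_pow_of_integrable_exp_mul (t := 1) one_ne_zero
      (by simpa using hexp) (by simpa using hexp_neg) 1
  calc 0 = ∫ ω, X ω ∂Q + ∫ ω, -X ω ∂Q := by rw [integral_neg, add_neg_cancel]
    _ ≤ _ := add_le_add (integral_le_log_integral_exp hX hexp)
        (integral_le_log_integral_exp hX.neg hexp_neg)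

end ConcavityAndJensen

namespace GoodPair

variable (D : GoodPair Ω P E) {μ : E}

lemma integral_obsMeasure (hμ : μ ∈ D.M) (f : Ω → ℝ) :
    ∫ ω, f ω ∂obsMeasure D μ = ∫ ω, f ω * D.p μ ω ∂P := by
  rw [obsMeasure, integral_withDensity_eq_integral_toReal_smul (D.p_meas μ hμ).ennreal_ofReal
    (Filter.Eventually.of_forall fun _ => ENNReal.ofReal_lt_top)]
  simp only [ENNReal.toReal_ofReal (D.p_pos μ hμ _).le, smul_eq_mul, mul_comm]

lemma integrable_obsMeasure_iff (hμ : μ ∈ D.M) {f : Ω → ℝ} :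
    Integrable f (obsMeasure D μ) ↔ Integrable (fun ω => f ω * D.p μ ω) P := by
  rw [obsMeasure, integrable_withDensity_iff (D.p_meas μ hμ).ennreal_ofReal
    (Filter.Eventually.of_forall fun _ => ENNReal.ofReal_lt_top)]
  simp only [ENNReal.toReal_ofReal (D.p_pos μ hμ _).le]

lemma isProbabilityMeasure_obsMeasure (hμ : μ ∈ D.M) :
    IsProbabilityMeasure (obsMeasure D μ) where
  measure_univ := by
    have hp : Integrable (D.p μ) P :=
      .of_integral_ne_zero (by rw [D.p_prob μ hμ]; exact one_ne_zero)
    rw [obsMeasure, withDensity_apply _ .univ, Measure.restrict_univ,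
      ← ofReal_integral_eq_lintegral_ofReal hp (.of_forall fun ω => (D.p_pos μ hμ ω).le),
      D.p_prob μ hμ, ENNReal.ofReal_one]

lemma log_integral_exp_add_log_integral_exp_neg_nonneg (hμ : μ ∈ D.M) {ψ : Ω → ℝ}
    (hψ : ψ ∈ D.F) :
    0 ≤ Real.log (∫ ω, Real.exp (ψ ω) * D.p μ ω ∂P)
      + Real.log (∫ ω, Real.exp (-ψ ω) * D.p μ ω ∂P) := by
  have := D.isProbabilityMeasure_obsMeasure hμ
  rw [← D.integral_obsMeasure hμ, ← D.integral_obsMeasure hμ]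
  exact _root_.log_integral_exp_add_log_integral_exp_neg_nonneg
    ((D.integrable_obsMeasure_iff hμ).2 (D.F_finite ψ hψ μ hμ))
    ((D.integrable_obsMeasure_iff hμ).2 (D.F_finite (-ψ) (D.F.neg_mem hψ) μ hμ))

lemma div_mem_F {φ : Ω → ℝ} (hφ : φ ∈ D.F) (α : ℝ) : (fun ω => φ ω / α) ∈ D.F := by
  simpa only [div_eq_inv_mul] using! D.F.smul_mem α⁻¹ hφ

lemma continuousOn_log_integral_exp [FiniteDimensional ℝ E] {ψ : Ω → ℝ} (hψ : ψ ∈ D.F) :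
    ContinuousOn (fun μ => Real.log (∫ ω, Real.exp (ψ ω) * D.p μ ω ∂P)) D.M :=
  (D.F_concave ψ hψ).continuousOn D.M_open

end GoodPair

section SaddleValue

variable (D : GoodPair Ω P E) (A : (Fin n → ℝ) →ᵃ[ℝ] E) (g : Fin n → ℝ)
  {X Y : Set (Fin n → ℝ)} {φ : Ω → ℝ} {α r s : ℝ}

lemma phiFun_eq_add (r s : ℝ) (x y : Fin n → ℝ) (φ : Ω → ℝ) (α : ℝ) :
    PhiFun D A g r x y φ α = PhiFun D A g s x y φ α + 2 * α * (r - s) := by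
  unfold PhiFun
  ring

lemma le_phiFun_self (r : ℝ) {x : Fin n → ℝ} (hx : A x ∈ D.M) (hφ : φ ∈ D.F) (hα : 0 ≤ α) :
    2 * α * r ≤ PhiFun D A g r x x φ α := by
  have hlog := mul_nonneg hα
    (D.log_integral_exp_add_log_integral_exp_neg_nonneg hx (D.div_mem_F hφ α))
  simp only [← neg_div] at hlog
  unfold PhiFun
  linarith

/-- The inner supremum `sup_{x, y ∈ X} Φ_r(x, y; φ, α)` in the inf-sup formula for `2Φ_*(r)`. It is
a real supremum, hence meaningful only when `Φ_r` is bounded above on `X × X`. -/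
noncomputable def supPhi (X : Set (Fin n → ℝ)) (r : ℝ) (φ : Ω → ℝ) (α : ℝ) : ℝ :=
  sSup {w : ℝ | ∃ x ∈ X, ∃ y ∈ X, w = PhiFun D A g r x y φ α}

lemma supPhi_le {c : ℝ} (hne : X.Nonempty)
    (h : ∀ x ∈ X, ∀ y ∈ X, PhiFun D A g r x y φ α ≤ c) : supPhi D A g X r φ α ≤ c := by
  obtain ⟨x₀, hx₀⟩ := hne
  refine csSup_le ⟨_, x₀, hx₀, x₀, hx₀, rfl⟩ ?_
  rintro _ ⟨x, hx, y, hy, rfl⟩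
  exact h x hx y hy

lemma phiStarIS_eq (X : Set (Fin n → ℝ)) (r : ℝ) :
    PhiStarIS D A g X r
      = 1 / 2 * sInf {v : ℝ | ∃ φ ∈ D.F, ∃ α : ℝ, 0 < α ∧ v = supPhi D A g X r φ α} :=
  rfl

lemma le_phiStarIS {c : ℝ} (h : ∀ φ ∈ D.F, ∀ α > 0, c ≤ 1 / 2 * supPhi D A g X r φ α) :
    c ≤ PhiStarIS D A g X r := by
  suffices 2 * c ≤ sInf {v : ℝ | ∃ φ ∈ D.F, ∃ α : ℝ, 0 < α ∧ v = supPhi D A g X r φ α} by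
    rw [phiStarIS_eq]
    linarith
  refine le_csInf ⟨_, 0, D.F.zero_mem, 1, one_pos, rfl⟩ ?_
  rintro _ ⟨φ, hφ, α, hα, rfl⟩
  linarith [h φ hφ α hα]

variable [FiniteDimensional ℝ E]

lemma continuousOn_phiFun (r : ℝ) (hφ : φ ∈ D.F) (α : ℝ) :
    ContinuousOn (fun z : (Fin n → ℝ) × (Fin n → ℝ) => PhiFun D A g r z.1 z.2 φ α)
      ((A ⁻¹' D.M) ×ˢ (A ⁻¹' D.M)) := by
  have hA : Continuous A := A.continuous_of_finiteDimensional
  have hy := (D.continuousOn_log_integral_exp (D.div_mem_F hφ α)).comp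
    (t := D.M) (hA.comp continuous_snd).continuousOn
    fun (z : (Fin n → ℝ) × (Fin n → ℝ)) (hz : z ∈ (A ⁻¹' D.M) ×ˢ (A ⁻¹' D.M)) => hz.2
  have hx := (D.continuousOn_log_integral_exp (D.div_mem_F (D.F.neg_mem hφ) α)).comp
    (t := D.M) (hA.comp continuous_fst).continuousOn
    fun (z : (Fin n → ℝ) × (Fin n → ℝ)) (hz : z ∈ (A ⁻¹' D.M) ×ˢ (A ⁻¹' D.M)) => hz.1
  have hg : Continuous fun z : (Fin n → ℝ) × (Fin n → ℝ) => g ⬝ᵥ z.1 - g ⬝ᵥ z.2 := by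
    unfold dotProduct
    fun_prop
  exact ((hg.continuousOn.add (hy.const_mul α)).add (hx.const_mul α)).add continuousOn_const

lemma phiFun_le_supPhi (r : ℝ) (hX : IsCompact X) (hA : MapsTo A X D.M) (hφ : φ ∈ D.F) (α : ℝ)
    {x y : Fin n → ℝ} (hx : x ∈ X) (hy : y ∈ X) :
    PhiFun D A g r x y φ α ≤ supPhi D A g X r φ α := by
  have hbdd : BddAbove ((fun z : (Fin n → ℝ) × (Fin n → ℝ) => PhiFun D A g r z.1 z.2 φ α) ''
      X ×ˢ X) :=
    (hX.prod hX).bddAbove_image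
      ((continuousOn_phiFun D A g r hφ α).mono (prod_mono hA hA))
  refine le_csSup (hbdd.mono ?_) ⟨x, hx, y, hy, rfl⟩
  rintro _ ⟨x, hx, y, hy, rfl⟩
  exact ⟨(x, y), ⟨hx, hy⟩, rfl⟩

lemma supPhi_le_add (hne : X.Nonempty) (hX : IsCompact X) (hA : MapsTo A X D.M) (hφ : φ ∈ D.F) :
    supPhi D A g X r φ α ≤ supPhi D A g X s φ α + 2 * α * (r - s) :=
  supPhi_le D A g hne fun x hx y hy => by
    rw [phiFun_eq_add D A g r s]
    gcongr
    exact phiFun_le_supPhi D A g s hX hA hφ α hx hy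

lemma supPhi_nonneg (hr : 0 ≤ r) (hne : X.Nonempty) (hX : IsCompact X) (hA : MapsTo A X D.M)
    (hφ : φ ∈ D.F) (hα : 0 ≤ α) : 0 ≤ supPhi D A g X r φ α := by
  obtain ⟨x, hx⟩ := hne
  calc 0 ≤ 2 * α * r := by positivity
    _ ≤ PhiFun D A g r x x φ α := le_phiFun_self D A g r (hA hx) hφ hα
    _ ≤ supPhi D A g X r φ α := phiFun_le_supPhi D A g r hX hA hφ α hx hx

lemma phiStarIS_nonneg (hr : 0 ≤ r) (hne : X.Nonempty) (hX : IsCompact X)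
    (hA : MapsTo A X D.M) : 0 ≤ PhiStarIS D A g X r :=
  le_phiStarIS D A g fun _ hφ _ hα =>
    mul_nonneg one_half_pos.le (supPhi_nonneg D A g hr hne hX hA hφ hα.le)

lemma phiStarIS_le (hr : 0 ≤ r) (hne : X.Nonempty) (hX : IsCompact X) (hA : MapsTo A X D.M)
    (hφ : φ ∈ D.F) (hα : 0 < α) : PhiStarIS D A g X r ≤ 1 / 2 * supPhi D A g X r φ α := by
  rw [phiStarIS_eq]
  refine mul_le_mul_of_nonneg_left (csInf_le ⟨0, ?_⟩ ⟨φ, hφ, α, hα, rfl⟩) one_half_pos.le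
  rintro _ ⟨ψ, hψ, β, hβ, rfl⟩
  exact supPhi_nonneg D A g hr hne hX hA hψ hβ.le

lemma phiStarIS_mono (hr : 0 ≤ r) (hXY : X ⊆ Y) (hne : X.Nonempty) (hX : IsCompact X)
    (hY : IsCompact Y) (hA : MapsTo A Y D.M) : PhiStarIS D A g X r ≤ PhiStarIS D A g Y r :=
  le_phiStarIS D A g fun φ hφ α hα =>
    calc PhiStarIS D A g X r ≤ 1 / 2 * supPhi D A g X r φ α :=
          phiStarIS_le D A g hr hne hX (hA.mono_left hXY) hφ hα
      _ ≤ 1 / 2 * supPhi D A g Y r φ α := by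
          gcongr
          exact supPhi_le D A g hne fun x hx y hy =>
            phiFun_le_supPhi D A g r hY hA hφ α (hXY hx) (hXY hy)

lemma concaveOn_phiStarIS (hne : X.Nonempty) (hX : IsCompact X) (hA : MapsTo A X D.M) :
    ConcaveOn ℝ (Ici 0) (PhiStarIS D A g X) := by
  refine ⟨convex_Ici 0, fun r hr s hs a b ha hb hab => le_phiStarIS D A g fun φ hφ α hα => ?_⟩
  set t := a • r + b • s with ht
  have bound : ∀ u ∈ Ici (0 : ℝ),
      PhiStarIS D A g X u ≤ 1 / 2 * supPhi D A g X t φ α + α * (u - t) := fun u hu => by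
    linarith [phiStarIS_le D A g hu hne hX hA hφ hα,
      supPhi_le_add D A g (r := u) (s := t) (α := α) hne hX hA hφ]
  calc a • PhiStarIS D A g X r + b • PhiStarIS D A g X s
      ≤ a * (1 / 2 * supPhi D A g X t φ α + α * (r - t))
        + b * (1 / 2 * supPhi D A g X t φ α + α * (s - t)) := by
        simp only [smul_eq_mul]
        gcongr
        exacts [bound r hr, bound s hs]
    _ = (a + b) * (1 / 2 * supPhi D A g X t φ α) + α * (t - (a + b) * t) := by
        rw [ht]
        simp only [smul_eq_mul]
        ring
    _ = 1 / 2 * supPhi D A g X t φ α := by rw [hab]; ring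

lemma phiStarIS_le_div_mul (hr : 0 < r) (hrs : r ≤ s) (hne : X.Nonempty) (hX : IsCompact X)
    (hA : MapsTo A X D.M) : PhiStarIS D A g X s ≤ s / r * PhiStarIS D A g X r := by
  have hs : (s / r) • r = s := div_mul_cancel₀ s hr.ne'
  have h := map_smul_le_smul_of_concaveOn (concaveOn_phiStarIS D A g hne hX hA) self_mem_Ici
    (phiStarIS_nonneg D A g le_rfl hne hX hA) ((one_le_div hr).2 hrs)
    (x := r) (hs.symm ▸ hr.le.trans hrs)
  rwa [hs] at h

end SaddleValue

section Adaptation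

variable {K k : ℕ} {thresh : ℕ → ℝ} {δ v : ℝ}

lemma isGoodIdx_of_forall_abs_sub_le {Ω' : Type*} {ghatk : ℕ → Ω' → ℝ} {ω : Ω'} (hk : k < K)
    (hacc : ∀ j, k ≤ j → j < K → |ghatk j ω - v| ≤ thresh j + δ) :
    isGoodIdx K ghatk thresh δ ω k := by
  refine ⟨hk, fun j hkj hj => ?_⟩
  calc |ghatk j ω - ghatk k ω| ≤ |ghatk j ω - v| + |ghatk k ω - v| := by
        rw [abs_sub_comm (ghatk k ω)]
        exact abs_sub_le _ _ _
    _ ≤ (thresh j + δ) + (thresh k + δ) := add_le_add (hacc j hkj hj) (hacc k le_rfl hk)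
    _ = thresh k + thresh j + 2 * δ := by ring

lemma abs_adaptEst_sub_le {Ω' : Type*} {ghatk : ℕ → Ω' → ℝ} {ω : Ω'} (hk : k < K)
    (hmono : ∀ j ≤ k, thresh j ≤ thresh k)
    (hacc : ∀ j, k ≤ j → j < K → |ghatk j ω - v| ≤ thresh j + δ) :
    |adaptEst K ghatk thresh δ ω - v| ≤ 3 * thresh k + 3 * δ := by
  have hgood : isGoodIdx K ghatk thresh δ ω k := isGoodIdx_of_forall_abs_sub_le hk hacc
  set l := kSel K ghatk thresh δ ω
  have hlk : l ≤ k := Nat.sInf_le hgood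
  have hl : isGoodIdx K ghatk thresh δ ω l :=
    Nat.sInf_mem (s := {i | isGoodIdx K ghatk thresh δ ω i}) ⟨k, hgood⟩
  calc |ghatk l ω - v| ≤ |ghatk k ω - ghatk l ω| + |ghatk k ω - v| := by
        rw [abs_sub_comm (ghatk k ω) (ghatk l ω)]
        exact abs_sub_le _ _ _
    _ ≤ (thresh l + thresh k + 2 * δ) + (thresh k + δ) :=
        add_le_add (hl.2 k hlk hk) (hacc k le_rfl hk)
    _ ≤ 3 * thresh k + 3 * δ := by linarith [hmono l hlk]

variable {ghatk : ℕ → Ω → ℝ}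

lemma measure_lt_abs_adaptEst_sub_le_sum (Q : Measure Ω) (hk : k < K)
    (hmono : ∀ j ≤ k, thresh j ≤ thresh k) :
    Q {ω | 3 * thresh k + 3 * δ < |adaptEst K ghatk thresh δ ω - v|}
      ≤ ∑ j ∈ Finset.Ico k K, Q {ω | thresh j + δ < |ghatk j ω - v|} := by
  refine (measure_mono fun ω hω => ?_).trans (measure_biUnion_finset_le _ _)
  contrapose! hω
  have hacc : ∀ j, k ≤ j → j < K → |ghatk j ω - v| ≤ thresh j + δ := by simpa using hω
  simpa using abs_adaptEst_sub_le hk hmono hacc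

lemma iSup_measure_lt_abs_adaptEst_sub_lt {ι : Type*} (Q : ι → Measure Ω) (f : ι → ℝ)
    {Xs : ℕ → Set ι} {η : ℝ≥0∞} (hk : k < K) (hmono : ∀ j ≤ k, thresh j ≤ thresh k)
    (hnest : ∀ j, k ≤ j → j < K → Xs k ⊆ Xs j)
    (hrisk : ∀ j, k ≤ j → j < K →
      (⨆ x ∈ Xs j, Q x {ω | thresh j + δ < |ghatk j ω - f x|}) < η) :
    (⨆ x ∈ Xs k, Q x {ω | 3 * thresh k + 3 * δ < |adaptEst K ghatk thresh δ ω - f x|})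
      < K * η := by
  calc ⨆ x ∈ Xs k, Q x {ω | 3 * thresh k + 3 * δ < |adaptEst K ghatk thresh δ ω - f x|}
      ≤ ∑ j ∈ Finset.Ico k K, ⨆ x ∈ Xs j, Q x {ω | thresh j + δ < |ghatk j ω - f x|} :=
        iSup₂_le fun x hx => (measure_lt_abs_adaptEst_sub_le_sum (Q x) hk hmono).trans <|
          Finset.sum_le_sum fun j hj =>
            have ⟨hkj, hjK⟩ := Finset.mem_Ico.1 hj
            le_iSup₂ (f := fun x (_ : x ∈ Xs j) => Q x {ω | thresh j + δ < |ghatk j ω - f x|})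
              x (hnest j hkj hjK hx)
    _ < ∑ _j ∈ Finset.Ico k K, η :=
        ENNReal.sum_lt_sum_of_nonempty (Finset.nonempty_Ico.2 hk) fun j hj =>
          hrisk j (Finset.mem_Ico.1 hj).1 (Finset.mem_Ico.1 hj).2
    _ ≤ K * η := by
        rw [Finset.sum_const, Nat.card_Ico, nsmul_eq_mul]
        gcongr
        exact Nat.sub_le K k

end Adaptation

theorem adaptive_estimate_deviation_general [FiniteDimensional ℝ E] (D : GoodPair Ω P E)
    {K : ℕ} {Xs : ℕ → Set (Fin n → ℝ)} (hXne : ∀ k < K, (Xs k).Nonempty)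
    (hXcp : ∀ k < K, IsCompact (Xs k)) (hnest : ∀ k k', k ≤ k' → k' < K → Xs k ⊆ Xs k')
    {A : (Fin n → ℝ) →ᵃ[ℝ] E} (hA : ∀ k < K, MapsTo A (Xs k) D.M) (g : Fin n → ℝ)
    {ε : ℝ} (hε : ε ∈ Ioo (0 : ℝ) 2) {δ : ℝ} {ghatk : ℕ → Ω → ℝ}
    (hrisk : ∀ k < K,
      (⨆ x ∈ Xs k, obsMeasure D (A x)
          {ω | PhiStarIS D A g (Xs k) (Real.log (2 * K / ε)) + δ < |ghatk k ω - g ⬝ᵥ x|})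
        < ENNReal.ofReal (ε / K)) :
    ∀ k < K,
      (⨆ x ∈ Xs k, obsMeasure D (A x)
          {ω | (3 * Real.log (2 * K / ε) / Real.log (2 / ε)) *
                PhiStarIS D A g (Xs k) (Real.log (2 / ε)) + 3 * δ
              < |adaptEst K ghatk
                  (fun j => PhiStarIS D A g (Xs j) (Real.log (2 * K / ε))) δ ω - g ⬝ᵥ x|})
        < ENNReal.ofReal ε := by
  intro k hk
  obtain ⟨hε0, hε2⟩ := hε
  have hK : (1 : ℝ) ≤ K := mod_cast Nat.one_le_of_lt hk
  set r := Real.log (2 / ε)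
  set s := Real.log (2 * K / ε)
  have hr : 0 < r := Real.log_pos ((one_lt_div hε0).2 hε2)
  have hrs : r ≤ s := Real.log_le_log (by positivity) (by gcongr; linarith)
  have hmono : ∀ j ≤ k, PhiStarIS D A g (Xs j) s ≤ PhiStarIS D A g (Xs k) s := fun j hj =>
    have hjK := hj.trans_lt hk
    phiStarIS_mono D A g (hr.le.trans hrs) (hnest j k hj hk) (hXne j hjK) (hXcp j hjK)
      (hXcp k hk) (hA k hk)
  have hscale : 3 * PhiStarIS D A g (Xs k) s ≤ 3 * s / r * PhiStarIS D A g (Xs k) r := by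
    rw [mul_div_assoc, mul_assoc]
    gcongr
    exact phiStarIS_le_div_mul D A g hr hrs (hXne k hk) (hXcp k hk) (hA k hk)
  calc _ ≤ ⨆ x ∈ Xs k, obsMeasure D (A x) {ω | 3 * PhiStarIS D A g (Xs k) s + 3 * δ
            < |adaptEst K ghatk (fun j => PhiStarIS D A g (Xs j) s) δ ω - g ⬝ᵥ x|} :=
        iSup₂_mono fun x _ => measure_mono fun ω => (add_le_add_left hscale _).trans_lt
    _ < K * ENNReal.ofReal (ε / K) :=
        iSup_measure_lt_abs_adaptEst_sub_lt (thresh := fun j => PhiStarIS D A g (Xs j) s)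
          (fun x => obsMeasure D (A x)) (g ⬝ᵥ ·) hk hmono (hnest k) fun j _ => hrisk j
    _ = ENNReal.ofReal ε := by
        rw [← ENNReal.ofReal_natCast, ← ENNReal.ofReal_mul (by positivity),
          mul_div_cancel₀ _ (by positivity)]

/-- **Proposition 5.1, bound (5.2).** For nested convex compact sets
`X⁰ ⊆ ⋯ ⊆ X^{K-1}` and component estimates `ĝ^k` whose `(ε/K)`-deviation over
`X^k` exceeds `Φ_*^k(ln(2K/ε)) + δ` with probability `< ε/K`, the adaptive
estimate `ĝ(ω) = ĝ^{k(ω)}(ω)` satisfies, for every `k < K`,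
`sup_{x∈X^k} Prob{|ĝ(ω) − gᵀx| > ϑ·Φ_*^k(ln(2/ε)) + 3δ} < ε` with
`ϑ = 3 ln(2K/ε)/ln(2/ε)`. -/
theorem adaptive_estimate_deviation
    {Ω : Type*} [MeasurableSpace Ω] [TopologicalSpace Ω] [PolishSpace Ω] [BorelSpace Ω]
    {P : Measure Ω} [SigmaFinite P] {m n : ℕ}
    (D : GoodPair Ω P (Fin m → ℝ))
    (K : ℕ) (hK : 1 ≤ K) (Xs : ℕ → Set (Fin n → ℝ))
    (hXne : ∀ k < K, (Xs k).Nonempty) (hXcp : ∀ k < K, IsCompact (Xs k))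
    (hXcv : ∀ k < K, Convex ℝ (Xs k))
    (hnest : ∀ k k', k ≤ k' → k' < K → Xs k ⊆ Xs k')
    (A : (Fin n → ℝ) →ᵃ[ℝ] (Fin m → ℝ)) (hA : ∀ x ∈ Xs (K - 1), A x ∈ D.M)
    (g : Fin n → ℝ) (ε : ℝ) (hε : ε ∈ Set.Ioo (0 : ℝ) (1/4)) (δ : ℝ) (hδ : 0 < δ)
    (ghatk : ℕ → Ω → ℝ) (hmeas : ∀ k < K, Measurable (ghatk k))
    (hrisk : ∀ k < K,
      (⨆ x ∈ Xs k, obsMeasure D (A x)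
          {ω | PhiStarIS D A g (Xs k) (Real.log (2 * K / ε)) + δ < |ghatk k ω - g ⬝ᵥ x|})
        < ENNReal.ofReal (ε / K)) :
    ∀ k < K,
      (⨆ x ∈ Xs k, obsMeasure D (A x)
          {ω | (3 * Real.log (2 * K / ε) / Real.log (2 / ε)) *
                PhiStarIS D A g (Xs k) (Real.log (2 / ε)) + 3 * δ
              < |adaptEst K ghatk
                  (fun j => PhiStarIS D A g (Xs j) (Real.log (2 * K / ε))) δ ω - g ⬝ᵥ x|})
        < ENNReal.ofReal ε :=
  adaptive_estimate_deviation_general D hXne hXcp hnest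
    (fun k hk _ hx => hA _ (hnest k (K - 1) (by lia) (by lia) hx)) g
    ⟨hε.1, by linarith [hε.2]⟩ hrisk
end
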